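/- arXiv:1409.8423 — 3 statements merged into one kernel-verified Lean document; each statement's English description precedes it below -/
import Mathlib

section
/- Let A ∈ ℤ∖{0,±1} be a cube-free integer, let α ∈ ℤ[ζ₃] be a nonzero cube-free integer, and let q be a prime element of ℤ[ζ₃] such that q divides α but q does not divide A. Then C_{A,α}(k_q) = ∅; that is, there is no (x,y,z) ∈ k_q³ ∖ {(0,0,0)} with αx³ + α⁻¹y³ = Az³ (equivalently, α²x³ + y³ = αAz³). -/
open NumberField IsDedekindDomain

/-- The height-one prime of a Dedekind domain determined by a prime element. -/
noncomputable def primeSpec {R : Type*} [CommRing R] [IsDomain R] [IsDedekindDomain R]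
    {q : R} (hq : Prime q) : HeightOneSpectrum R where
  asIdeal := Ideal.span {q}
  isPrime := (Ideal.span_singleton_prime hq.ne_zero).mpr hq
  ne_bot := by simpa [Ne, Ideal.span_singleton_eq_bot] using hq.ne_zero

/-!
If `∑ aᵢ xᵢⁿ = 0` with some nonzero term, then by the ultrametric inequality two nonzero terms share
the largest value, so two coefficients have the same value modulo `n`-th powers in the value group.
The coefficients of `α xⁿ + α⁻¹ yⁿ = a zⁿ` have orders `k`, `-k` and `0` at a prime not dividing `a`,
where `k` is the order of `α`. If `n` is odd and `0 < k < n`, then `n` does not divide `2k`, so these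
orders are pairwise incongruent modulo `n`. The curve `α x³ + α⁻¹ y³ = A z³` is the case `n = 3`.
-/

section Valuation

lemma exists_ne_valuation_eq_of_sum_eq_zero {R Γ₀ ι : Type*} [Ring R]
    [LinearOrderedCommMonoidWithZero Γ₀] (v : Valuation R Γ₀) {s : Finset ι} {f : ι → R}
    (hsum : ∑ i ∈ s, f i = 0) (hf : ∃ i ∈ s, v (f i) ≠ 0) :
    ∃ i ∈ s, ∃ j ∈ s, i ≠ j ∧ v (f i) ≠ 0 ∧ v (f i) = v (f j) := by
  classical
  obtain ⟨k, hk, hfk⟩ := hf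
  obtain ⟨i, hi, hmax⟩ := s.exists_max_image (fun l ↦ v (f l)) ⟨k, hk⟩
  have hvi : v (f i) ≠ 0 := ((zero_lt_iff.mpr hfk).trans_le (hmax k hk)).ne'
  by_contra! hne
  have hlt : ∀ j ∈ s \ {i}, v (f j) < v (f i) := by
    intro j hj
    rw [Finset.mem_sdiff, Finset.mem_singleton] at hj
    exact (hmax j hj.1).lt_of_ne' (hne i hi j hj.1 (Ne.symm hj.2) hvi)
  have hv : v (∑ l ∈ s, f l) = v (f i) := v.map_sum_eq_of_lt hi hlt
  rw [hsum, map_zero] at hv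
  exact hvi hv.symm

variable {F Γ₀ : Type*} [DivisionRing F] [LinearOrderedCommGroupWithZero Γ₀] (v : Valuation F Γ₀)

theorem eq_zero_of_sum_mul_pow_eq_zero {ι : Type*} [Fintype ι] {n : ℕ} {a x : ι → F}
    (ha : ∀ i, a i ≠ 0) (hpow : Pairwise fun i j ↦ ∀ t, v (a i) / v (a j) ≠ t ^ n)
    (hsum : ∑ i, a i * x i ^ n = 0) (i : ι) : x i = 0 := by
  by_contra hxi
  have hterm : v (a i * x i ^ n) ≠ 0 := v.ne_zero_iff.mpr (mul_ne_zero (ha i) (pow_ne_zero n hxi))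
  obtain ⟨j, -, k, -, hjk, hne, heq⟩ :=
    exists_ne_valuation_eq_of_sum_eq_zero v hsum ⟨i, Finset.mem_univ i, hterm⟩
  rw [map_mul, map_pow] at hne
  have hk : v (a k) ≠ 0 := v.ne_zero_iff.mpr (ha k)
  refine hpow hjk (v (x k) / v (x j)) ?_
  rw [map_mul, map_mul, map_pow, map_pow] at heq
  rw [div_pow, div_eq_div_iff hk (right_ne_zero_of_mul hne), heq, mul_comm]

theorem eq_zero_of_mul_pow_add_inv_mul_pow_eq {n : ℕ} {α a x y z : F} (hα : α ≠ 0)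
    (hpow : ∀ t, v α ^ 2 ≠ t ^ n) (ha : v a = 1) (h : α * x ^ n + α⁻¹ * y ^ n = a * z ^ n) :
    x = 0 ∧ y = 0 ∧ z = 0 := by
  have ha0 : a ≠ 0 := by
    rintro rfl
    simp at ha
  have hpow' : ∀ t, v α ≠ t ^ n := fun t ht ↦ hpow (t ^ 2) (by rw [ht, pow_right_comm])
  have hinv : ∀ t, (v α)⁻¹ ≠ t ^ n := fun t ht ↦ hpow' t⁻¹ (by rw [inv_pow, ← ht, inv_inv])
  have : Std.Symm fun i j ↦ ∀ t, v (![α, α⁻¹, -a] i) / v (![α, α⁻¹, -a] j) ≠ t ^ n :=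
    ⟨fun i j hij t ht ↦ hij t⁻¹ (by rw [inv_pow, ← ht, inv_div])⟩
  have hzero := eq_zero_of_sum_mul_pow_eq_zero v (n := n) (a := ![α, α⁻¹, -a]) (x := ![x, y, z])
    (by simp [Fin.forall_fin_succ, hα, ha0])
    (.of_lt (by simpa [Fin.forall_fin_succ, ha, ← sq, hpow'] using ⟨hpow, hinv⟩))
    (by simp [Fin.sum_univ_three, h])
  exact ⟨hzero 0, hzero 1, hzero 2⟩

end Valuation

lemma natCast_dvd_of_exp_eq_pow {k : ℤ} {n : ℕ} {t : WithZero (Multiplicative ℤ)}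
    (h : WithZero.exp k = t ^ n) : (n : ℤ) ∣ k := by
  refine ⟨WithZero.log t, ?_⟩
  rw [← WithZero.log_exp k, h, WithZero.log_pow, nsmul_eq_mul]

section HeightOneSpectrum

variable {R : Type*} [CommRing R] [IsDedekindDomain R]

lemma mem_primeSpec_asIdeal_pow {q : R} (hq : Prime q) (n : ℕ) (r : R) :
    r ∈ (primeSpec hq).asIdeal ^ n ↔ q ^ n ∣ r := by
  rw [primeSpec, Ideal.span_singleton_pow, Ideal.mem_span_singleton]

lemma exists_intValuation_eq_exp_neg (v : HeightOneSpectrum R) {m n : ℕ} {r : R}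
    (hm : r ∈ v.asIdeal ^ m) (hn : r ∉ v.asIdeal ^ n) :
    ∃ k : ℕ, m ≤ k ∧ k < n ∧ v.intValuation r = WithZero.exp (-(k : ℤ)) := by
  have hr : r ≠ 0 := by
    rintro rfl
    exact hn (zero_mem _)
  have hk := v.intValuation_eq_exp_neg_multiplicity hr
  refine ⟨_, ?_, ?_, hk⟩
  · rw [← v.intValuation_le_pow_iff_mem, hk, WithZero.exp_le_exp] at hm
    lia
  · rw [← v.intValuation_le_pow_iff_mem, hk, WithZero.exp_le_exp] at hn
    lia

variable (K : Type*) [Field K] [Algebra R K] [IsFractionRing R K]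

lemma valued_algebraMap_adicCompletion (v : HeightOneSpectrum R) (r : R) :
    Valued.v (algebraMap R (v.adicCompletion K) r) = v.intValuation r :=
  (v.valuedAdicCompletion_eq_valuation' (algebraMap R K r)).trans (v.valuation_of_algebraMap r)

theorem stmt0_general (v : HeightOneSpectrum R) {n : ℕ} (hn : Odd n) {α a : R}
    (hα : α ∈ v.asIdeal) (hαn : α ∉ v.asIdeal ^ n) (ha : a ∉ v.asIdeal)
    {x y z : v.adicCompletion K}
    (h : algebraMap R (v.adicCompletion K) α * x ^ n
      + (algebraMap R (v.adicCompletion K) α)⁻¹ * y ^ n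
      = algebraMap R (v.adicCompletion K) a * z ^ n) :
    x = 0 ∧ y = 0 ∧ z = 0 := by
  obtain ⟨k, hk, hkn, hvα⟩ := exists_intValuation_eq_exp_neg v (by rwa [pow_one]) hαn
  rw [← valued_algebraMap_adicCompletion K] at hvα
  refine eq_zero_of_mul_pow_add_inv_mul_pow_eq Valued.v ?_ ?_ ?_ h
  · rw [← (Valued.v).ne_zero_iff, hvα]
    exact WithZero.exp_ne_zero
  · intro t ht
    rw [hvα, ← WithZero.exp_nsmul] at ht
    have hdvd := natCast_dvd_of_exp_eq_pow ht
    have hnk : n ∣ 2 * k := by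
      simpa [← Int.natCast_dvd_natCast] using hdvd
    exact Nat.not_dvd_of_pos_of_lt hk hkn (hn.coprime_two_right.dvd_of_dvd_mul_left hnk)
  · rw [valued_algebraMap_adicCompletion, HeightOneSpectrum.intValuation_eq_one_iff.mpr ha]

end HeightOneSpectrum

/-- Lemma 2.1: if `A ∈ ℤ ∖ {0, ±1}` is cube-free, `α ∈ ℤ[ζ₃]` is a nonzero
cube-free integer, and `q` is a prime of `ℤ[ζ₃]` dividing `α` but not `A`, then the curve
`α x³ + α⁻¹ y³ = A z³` has no `k_q`-rational point. -/
theorem stmt0 (K : Type*) [Field K] [NumberField K] [IsCyclotomicExtension {3} ℚ K]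
    (A : ℤ) (hA0 : A ≠ 0) (hA1 : A ≠ 1) (hA1' : A ≠ -1)
    (hAcf : ∀ p : ℤ, Prime p → ¬ p ^ 3 ∣ A)
    (α : 𝓞 K) (hα0 : α ≠ 0) (hαcf : ∀ p : 𝓞 K, Prime p → ¬ p ^ 3 ∣ α)
    (q : 𝓞 K) (hq : Prime q) (hqα : q ∣ α) (hqA : ¬ q ∣ (A : 𝓞 K)) :
    ¬ ∃ x y z : (primeSpec hq).adicCompletion K,
        ¬(x = 0 ∧ y = 0 ∧ z = 0) ∧
        algebraMap (𝓞 K) ((primeSpec hq).adicCompletion K) α * x ^ 3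
          + (algebraMap (𝓞 K) ((primeSpec hq).adicCompletion K) α)⁻¹ * y ^ 3
          = algebraMap K ((primeSpec hq).adicCompletion K) (A : K) * z ^ 3 := by
  rintro ⟨x, y, z, hne, h⟩
  have hmem := mem_primeSpec_asIdeal_pow hq
  rw [← map_intCast (algebraMap (𝓞 K) K), ← IsScalarTower.algebraMap_apply] at h
  exact hne (stmt0_general K (primeSpec hq) (by decide) (by simpa [hqα] using hmem 1 α)
    ((hmem 3 α).not.mpr (hαcf q hq)) (by simpa [hqA] using hmem 1 A) h)
end

section
/- Let A ∈ ℤ∖{0,±1} be a cube-free integer, let α ∈ ℤ[ζ₃] be a nonzero cube-free integer, and let q be a prime element of ℤ[ζ₃] such that q‖A (q divides A but q² does not), q does not divide 3, and q does not divide α. Then C_{A,α}(k_q) ≠ ∅ if and only if the image of α in the residue field 𝔽_q = ℤ[ζ₃]/(q) is a nonzero cube in 𝔽_q. -/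
open NumberField IsDedekindDomain

/-!
Write `a` for the image of `α` in the residue field. As `α` is a unit at `v` and `v(A)` is not a
cube, the two terms on the left-hand side of a nontrivial solution `(x, y, z)` must cancel to
leading order. Hence `v(x) = v(y)`, and reducing modulo `v` gives `a + a⁻¹ t³ = 0` for the class
`t` of `y / x`. So `-a²` is a cube, and then so is `a`, because `a = a³ / a²`. Conversely, if
`a = s³` then `t = -s²` solves `a + a⁻¹ t³ = 0`. Since `3` is a unit at `v`, Hensel's lemma lifts
`t` to a solution of the form `(1, y, 0)`.
-/

open IsLocalRing Topology

section Henselian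

theorem henselianLocalRing_of_isAdicComplete {O : Type*} [CommRing O] [IsLocalRing O]
    [IsAdicComplete (maximalIdeal O) O] : HenselianLocalRing O where
  is_henselian f hf a₀ h₀ h₁ :=
    HenselianRing.is_henselian f hf a₀ h₀ (h₁.map (Ideal.Quotient.mk (maximalIdeal O)))

theorem exists_pow_eq_of_residue_eq_pow {O : Type*} [CommRing O] [HenselianLocalRing O] {n : ℕ}
    (hn : IsUnit (n : O)) {a : O} (ha : IsUnit a) {t : ResidueField O} (h : residue O a = t ^ n) :
    ∃ b : O, b ^ n = a := by
  obtain ⟨b₀, rfl⟩ := residue_surjective t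
  have hn0 : n ≠ 0 := by
    rintro rfl
    simp at hn
  have hb₀ : IsUnit b₀ := by
    rw [← residue_ne_zero_iff_isUnit] at ha ⊢
    exact fun h0 ↦ ha (by rw [h, h0, zero_pow hn0])
  obtain ⟨b, hb, -⟩ := HenselianLocalRing.is_henselian (Polynomial.X ^ n - Polynomial.C a)
    (Polynomial.monic_X_pow_sub_C a hn0) b₀
    (by rw [← residue_eq_zero_iff]; simp [h])
    (by simpa [Polynomial.derivative_X_pow] using hn.mul (hb₀.pow (n - 1)))
  exact ⟨b, by simpa [sub_eq_zero] using hb⟩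

variable {L Γ₀ : Type*} [Field L] [LinearOrderedCommGroupWithZero Γ₀]

theorem coe_span_singleton_pow_eq_preimage {v : Valuation L Γ₀} (ϖ : v.valuationSubring) (n : ℕ) :
    ((Ideal.span {ϖ} ^ n : Ideal v.valuationSubring) : Set v.valuationSubring) =
      (↑) ⁻¹' {x : L | v.restrict x ≤ v.restrict ϖ ^ n} := by
  rw [Ideal.span_singleton_pow,
    (Valuation.valuationSubring.integers v).coe_span_singleton_eq_setOfPred_le_v_algebraMap]
  ext x
  simp only [Set.mem_preimage, Set.mem_ofPred_eq, ← map_pow, Valuation.restrict_le_iff]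
  rfl

variable [Valued L Γ₀]

instance : IsTopologicalRing (Valued.v : Valuation L Γ₀).valuationSubring :=
  inferInstanceAs (IsTopologicalRing (Valued.v : Valuation L Γ₀).valuationSubring.toSubring)

instance : IsUniformAddGroup (Valued.v : Valuation L Γ₀).valuationSubring :=
  inferInstanceAs
    (IsUniformAddGroup (Valued.v : Valuation L Γ₀).valuationSubring.toSubring.toAddSubgroup)

instance [CompleteSpace L] : CompleteSpace (Valued.v : Valuation L Γ₀).valuationSubring :=
  (Valued.isClosed_valuationSubring L).completeSpace_coe

theorem isAdic_maximalIdeal_valuationSubring [MulArchimedean Γ₀]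
    [IsDiscreteValuationRing (Valued.v : Valuation L Γ₀).valuationSubring] :
    IsAdic (maximalIdeal (Valued.v : Valuation L Γ₀).valuationSubring) := by
  obtain ⟨ϖ, hϖ⟩ := IsDiscreteValuationRing.exists_irreducible
    (Valued.v : Valuation L Γ₀).valuationSubring
  have hϖ_lt : Valued.v (ϖ : L) < 1 :=
    (Valuation.valuationSubring.integers Valued.v).valuation_irreducible_lt_one hϖ
  have hϖ_ne : Valued.v.restrict (ϖ : L) ≠ 0 := by simpa using hϖ.ne_zero
  rw [hϖ.maximalIdeal_eq]
  refine isAdic_iff.mpr ⟨fun n ↦ ?_, fun s hs ↦ ?_⟩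
  · rw [coe_span_singleton_pow_eq_preimage]
    exact (Valued.isOpen_closedBall L (pow_ne_zero n hϖ_ne)).preimage continuous_subtype_val
  · obtain ⟨t, ht, hts⟩ := (mem_nhds_induced _ _ _).mp hs
    obtain ⟨γ, hγ⟩ := Valued.mem_nhds_zero.mp ht
    obtain ⟨n, hn⟩ := exists_pow_lt₀ hϖ_lt
      (Units.map MonoidWithZeroHom.ValueGroup₀.embedding.toMonoidHom γ)
    have hϖ_pow : Valued.v.restrict (ϖ : L) ^ n < γ := by
      rw [← map_pow, Valuation.restrict_lt_iff_lt_embedding, map_pow]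
      exact hn
    refine ⟨n, ?_⟩
    rw [coe_span_singleton_pow_eq_preimage]
    exact fun x hx ↦ hts (hγ (Set.mem_ofPred.mp hx |>.trans_lt hϖ_pow))

theorem henselianLocalRing_valuationSubring [MulArchimedean Γ₀] [CompleteSpace L]
    [IsDiscreteValuationRing (Valued.v : Valuation L Γ₀).valuationSubring] :
    HenselianLocalRing (Valued.v : Valuation L Γ₀).valuationSubring :=
  have : IsAdicComplete (maximalIdeal (Valued.v : Valuation L Γ₀).valuationSubring) _ :=
    isAdic_maximalIdeal_valuationSubring.isAdicComplete_iff.mpr ⟨inferInstance, inferInstance⟩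
  henselianLocalRing_of_isAdicComplete

end Henselian

section DiagonalEquation

theorem eq_zero_of_pow_eq_mul_pow {G : Type*} [CommGroupWithZero G] {c a b : G} {n : ℕ}
    (hc : ∀ γ, c ≠ γ ^ n) (h : a ^ n = c * b ^ n) : a = 0 ∧ b = 0 := by
  have hn : n ≠ 0 := by
    rintro rfl
    exact hc 1 (by simpa using h.symm)
  have hb : b = 0 := by
    by_contra hb
    exact hc (a / b) (by rw [div_pow, h, mul_div_cancel_right₀ _ (pow_ne_zero n hb)])
  refine ⟨?_, hb⟩
  rwa [hb, zero_pow hn, mul_zero, pow_eq_zero_iff hn] at h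

variable {L Γ₀ : Type*} [Field L] [LinearOrderedCommGroupWithZero Γ₀] {v : Valuation L Γ₀}
  {a b c x y z : L} {n : ℕ}

theorem valuation_mul_pow_add_mul_pow_lt (ha : v a = 1) (hb : v b = 1) (hc : ∀ γ, v c ≠ γ ^ n)
    (h : a * x ^ n + b * y ^ n = c * z ^ n) (h0 : ¬(x = 0 ∧ y = 0 ∧ z = 0)) :
    v (a * x ^ n + b * y ^ n) < max (v x) (v y) ^ n := by
  refine lt_of_le_of_ne (v.map_add_le ?_ ?_) fun heq ↦ h0 ?_
  · simpa [ha] using pow_le_pow_left' (le_max_left (v x) (v y)) n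
  · simpa [hb] using pow_le_pow_left' (le_max_right (v x) (v y)) n
  · rw [h, map_mul, map_pow] at heq
    obtain ⟨hmax, hz⟩ := eq_zero_of_pow_eq_mul_pow hc heq.symm
    obtain ⟨hx, hy⟩ := max_le_iff.mp hmax.le
    simpa only [le_zero_iff, map_eq_zero] using And.intro hx (And.intro hy hz.le)

theorem valuation_eq_of_mul_pow_add_mul_pow_eq (hn : n ≠ 0) (ha : v a = 1) (hb : v b = 1)
    (hc : ∀ γ, v c ≠ γ ^ n) (h : a * x ^ n + b * y ^ n = c * z ^ n)
    (h0 : ¬(x = 0 ∧ y = 0 ∧ z = 0)) : v x = v y := by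
  by_contra hxy
  have hvx : v (a * x ^ n) = v x ^ n := by simp [ha]
  have hvy : v (b * y ^ n) = v y ^ n := by simp [hb]
  have hne : v (a * x ^ n) ≠ v (b * y ^ n) := by
    rwa [hvx, hvy, Ne, pow_left_inj₀ zero_le zero_le hn]
  have hlt := valuation_mul_pow_add_mul_pow_lt ha hb hc h h0
  rw [v.map_add_of_distinct_val hne, hvx, hvy, (pow_left_mono n).map_max] at hlt
  exact hlt.false

theorem exists_valuation_add_mul_pow_lt_one (hn : n ≠ 0) (ha : v a = 1) (hb : v b = 1)
    (hc : ∀ γ, v c ≠ γ ^ n) (h : a * x ^ n + b * y ^ n = c * z ^ n)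
    (h0 : ¬(x = 0 ∧ y = 0 ∧ z = 0)) : ∃ t, v t = 1 ∧ v (a + b * t ^ n) < 1 := by
  have hxy := valuation_eq_of_mul_pow_add_mul_pow_eq hn ha hb hc h h0
  have hlt := valuation_mul_pow_add_mul_pow_lt ha hb hc h h0
  rw [← hxy, max_self] at hlt
  have hvx : v x ≠ 0 := by
    intro hvx
    rw [hvx, zero_pow hn] at hlt
    exact not_lt_zero hlt
  have hx : x ≠ 0 := v.ne_zero_iff.mp hvx
  refine ⟨y / x, by rw [map_div₀, ← hxy, div_self hvx], ?_⟩
  have hdiv : a + b * (y / x) ^ n = (a * x ^ n + b * y ^ n) / x ^ n := by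
    rw [div_pow, add_div, mul_div_cancel_right₀ a (pow_ne_zero n hx), mul_div_assoc]
  rwa [hdiv, map_div₀, map_pow, div_lt_one₀ (pow_pos (zero_lt_iff.mpr hvx) n)]

variable {O : Type*} [CommRing O] [Algebra O L]

theorem residue_eq_zero_iff_valuation_lt_one [IsLocalRing O] (hv : v.Integers O) {a : O} :
    residue O a = 0 ↔ v (algebraMap O L a) < 1 := by
  rw [residue_eq_zero_iff, mem_maximalIdeal, mem_nonunits_iff, hv.isUnit_iff_valuation_eq_one,
    (hv.map_le_one a).lt_iff_ne]

theorem exists_mul_pow_add_mul_pow_eq_iff [HenselianLocalRing O] (hv : v.Integers O)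
    (hn : IsUnit (n : O)) (a b : Oˣ) (hc : ∀ γ, v c ≠ γ ^ n) :
    (∃ x y z : L, ¬(x = 0 ∧ y = 0 ∧ z = 0) ∧
        algebraMap O L a * x ^ n + algebraMap O L b * y ^ n = c * z ^ n) ↔
      ∃ t : ResidueField O, residue O a + residue O b * t ^ n = 0 := by
  have hn0 : n ≠ 0 := by
    rintro rfl
    simp at hn
  constructor
  · rintro ⟨x, y, z, h0, h⟩
    obtain ⟨t, ht, hlt⟩ := exists_valuation_add_mul_pow_lt_one hn0
      (hv.valuation_unit a) (hv.valuation_unit b) hc h h0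
    obtain ⟨s, rfl⟩ := hv.exists_of_le_one ht.le
    refine ⟨residue O s, ?_⟩
    rw [← map_pow, ← map_mul, ← map_add, residue_eq_zero_iff_valuation_lt_one hv]
    simpa using hlt
  · rintro ⟨t, ht⟩
    have hb : (b : O) * ↑b⁻¹ = 1 := b.mul_inv
    have hab : residue O ↑(-(a * b⁻¹)) = t ^ n := by
      have hb' : residue O b * residue O ↑b⁻¹ = 1 := by rw [← map_mul, hb, map_one]
      simp only [Units.val_neg, Units.val_mul, map_neg, map_mul]
      linear_combination residue O ↑b⁻¹ * -ht + t ^ n * hb'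
    obtain ⟨s, hs⟩ := exists_pow_eq_of_residue_eq_pow hn (-(a * b⁻¹)).isUnit hab
    have h : (a : O) + b * s ^ n = 0 := by
      simp only [hs, Units.val_neg, Units.val_mul]
      linear_combination -(a : O) * hb
    refine ⟨1, algebraMap O L s, 0, by simp, ?_⟩
    simpa [hn0] using congrArg (algebraMap O L) h

theorem exists_add_inv_mul_cube_eq_zero_iff {k : Type*} [Field k] {a : k} (ha : a ≠ 0) :
    (∃ t, a + a⁻¹ * t ^ 3 = 0) ↔ ∃ s, a = s ^ 3 := by
  constructor
  · rintro ⟨t, h⟩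
    have ht : t ^ 3 = -a ^ 2 := by
      field_simp at h
      linear_combination h
    refine ⟨-a / t, ?_⟩
    rw [div_pow, ht]
    field_simp
  · rintro ⟨s, rfl⟩
    exact ⟨-s ^ 2, by field_simp; ring⟩

end DiagonalEquation

theorem exp_neg_one_ne_pow {n : ℕ} (hn : n ≠ 1) (γ : WithZero (Multiplicative ℤ)) :
    WithZero.exp (-1 : ℤ) ≠ γ ^ n := by
  intro h
  have hlog : -1 = n * WithZero.log γ := by simpa using congrArg WithZero.log h
  have hdvd : (n : ℤ) ∣ 1 := ⟨-WithZero.log γ, by linear_combination -hlog⟩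
  exact hn (by exact_mod_cast Int.eq_one_of_dvd_one n.cast_nonneg hdvd)

section AdicCompletion

variable {R K : Type*} [CommRing R] [IsDedekindDomain R] [Field K] [Algebra R K]
  [IsFractionRing R K] (v : HeightOneSpectrum R)

instance : HenselianLocalRing (v.adicCompletionIntegers K) :=
  henselianLocalRing_valuationSubring

theorem valued_algebraMap_adicCompletion_s2 (a : K) :
    Valued.v (algebraMap K (v.adicCompletion K) a) = v.valuation K a :=
  v.valuedAdicCompletion_eq_valuation' a

theorem exists_valued_algebraMap_sub_lt_one {u : v.adicCompletion K} (hu : Valued.v u ≤ 1) :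
    ∃ a : R, Valued.v (algebraMap R (v.adicCompletion K) a - u) < 1 := by
  have hball : {y : v.adicCompletion K | Valued.v (y - u) < 1} ∈ 𝓝 u :=
    Valued.mem_nhds.mpr ⟨1, fun y hy ↦ by simpa [Valuation.restrict_lt_one_iff] using hy⟩
  obtain ⟨_, ⟨c, rfl⟩, hcu⟩ := (v.denseRange_algebraMap K).inter_nhds_nonempty hball
  have hc : v.valuation K c ≤ 1 := by
    rw [← valued_algebraMap_adicCompletion_s2,
      ← sub_add_cancel (algebraMap K (v.adicCompletion K) c) u]
    exact Valued.v.map_add_le (le_of_lt hcu) hu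
  obtain ⟨a, hac⟩ := v.exists_valuation_sub_lt_of_integer hc 1
  rw [← valued_algebraMap_adicCompletion_s2, map_sub, ← IsScalarTower.algebraMap_apply] at hac
  refine ⟨a, ?_⟩
  rw [← sub_add_sub_cancel _ (algebraMap K (v.adicCompletion K) c)]
  exact Valued.v.map_add_lt hac hcu

variable (K)

theorem residue_algebraMap_adicCompletionIntegers_surjective :
    Function.Surjective ((residue (v.adicCompletionIntegers K)).comp
      (algebraMap R (v.adicCompletionIntegers K))) := by
  intro t
  obtain ⟨u, rfl⟩ := residue_surjective t
  obtain ⟨a, ha⟩ := exists_valued_algebraMap_sub_lt_one v u.2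
  refine ⟨a, ?_⟩
  rwa [RingHom.comp_apply, ← sub_eq_zero, ← map_sub, residue_eq_zero_iff_valuation_lt_one
    (HeightOneSpectrum.adicCompletionIntegers.integers K v), map_sub]

theorem ker_residue_algebraMap_adicCompletionIntegers :
    RingHom.ker ((residue (v.adicCompletionIntegers K)).comp
      (algebraMap R (v.adicCompletionIntegers K))) = v.asIdeal := by
  ext a
  rw [RingHom.mem_ker, RingHom.comp_apply, residue_eq_zero_iff_valuation_lt_one
    (HeightOneSpectrum.adicCompletionIntegers.integers K v),
    ← v.valuation_lt_one_iff_mem (K := K), ← v.valuedAdicCompletion_eq_valuation]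
  rfl

/-- The isomorphism between the residue field `R ⧸ v` of a prime `v` of a Dedekind domain `R` and
the residue field of the `v`-adic completion, induced by `R → v.adicCompletionIntegers K`. -/
noncomputable def quotientEquivResidueField :
    R ⧸ v.asIdeal ≃+* ResidueField (v.adicCompletionIntegers K) :=
  (Ideal.quotEquivOfEq (ker_residue_algebraMap_adicCompletionIntegers K v).symm).trans
    (RingHom.quotientKerEquivOfSurjective
      (residue_algebraMap_adicCompletionIntegers_surjective K v))

theorem quotientEquivResidueField_mk (a : R) :
    quotientEquivResidueField K v (Ideal.Quotient.mk v.asIdeal a) =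
      residue (v.adicCompletionIntegers K) (algebraMap R (v.adicCompletionIntegers K) a) :=
  rfl

theorem isUnit_algebraMap_adicCompletionIntegers {a : R} (ha : a ∉ v.asIdeal) :
    IsUnit (algebraMap R (v.adicCompletionIntegers K) a) := by
  rw [← residue_ne_zero_iff_isUnit]
  rwa [← ker_residue_algebraMap_adicCompletionIntegers K v] at ha

theorem exists_residue_algebraMap_eq_pow_iff {n : ℕ} (hn : n ≠ 0) {a : R} (ha : a ∉ v.asIdeal) :
    (∃ s, residue (v.adicCompletionIntegers K)
        (algebraMap R (v.adicCompletionIntegers K) a) = s ^ n) ↔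
      ∃ c : R ⧸ v.asIdeal, c ≠ 0 ∧ Ideal.Quotient.mk v.asIdeal a = c ^ n := by
  have ha0 : Ideal.Quotient.mk v.asIdeal a ≠ 0 := by rwa [Ne, Ideal.Quotient.eq_zero_iff_mem]
  rw [(quotientEquivResidueField K v).surjective.exists]
  refine exists_congr fun c ↦ ?_
  rw [← quotientEquivResidueField_mk, ← map_pow, (quotientEquivResidueField K v).injective.eq_iff]
  refine ⟨fun h ↦ ⟨?_, h⟩, And.right⟩
  rintro rfl
  exact ha0 (by rw [h, zero_pow hn])

theorem valuation_primeSpec_of_dvd_of_not_sq_dvd {q a : R} (hq : Prime q) (h : q ∣ a)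
    (h2 : ¬q ^ 2 ∣ a) :
    (primeSpec hq).valuation K (algebraMap R K a) = WithZero.exp (-1) := by
  obtain ⟨b, rfl⟩ := h
  have hb : b ∉ (primeSpec hq).asIdeal := fun hb ↦
    h2 (by rw [sq]; exact mul_dvd_mul_left q (Ideal.mem_span_singleton.mp hb))
  rw [HeightOneSpectrum.valuation_of_algebraMap, map_mul,
    (primeSpec hq).intValuation_singleton hq.ne_zero rfl,
    HeightOneSpectrum.intValuation_eq_one_iff.mpr hb, mul_one]

end AdicCompletion

theorem stmt2_general {R K : Type*} [CommRing R] [IsDedekindDomain R] [Field K] [Algebra R K]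
    [IsFractionRing R K] (v : HeightOneSpectrum R) {A : K} (hA : ∀ γ, v.valuation K A ≠ γ ^ 3)
    {α : R} (h3 : (3 : R) ∉ v.asIdeal) (hα : α ∉ v.asIdeal) :
    (∃ x y z : v.adicCompletion K, ¬(x = 0 ∧ y = 0 ∧ z = 0) ∧
        algebraMap R (v.adicCompletion K) α * x ^ 3
          + (algebraMap R (v.adicCompletion K) α)⁻¹ * y ^ 3
          = algebraMap K (v.adicCompletion K) A * z ^ 3)
      ↔ ∃ c : R ⧸ v.asIdeal, c ≠ 0 ∧ Ideal.Quotient.mk v.asIdeal α = c ^ 3 := by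
  obtain ⟨a, ha⟩ := isUnit_algebraMap_adicCompletionIntegers K v hα
  have h3' : IsUnit ((3 : ℕ) : v.adicCompletionIntegers K) := by
    simpa only [map_ofNat, Nat.cast_ofNat] using isUnit_algebraMap_adicCompletionIntegers K v h3
  have hA' : ∀ γ, Valued.v (algebraMap K (v.adicCompletion K) A) ≠ γ ^ 3 := by
    simpa only [valued_algebraMap_adicCompletion_s2] using hA
  have hres : residue (v.adicCompletionIntegers K) a ≠ 0 :=
    (residue_ne_zero_iff_isUnit _).mpr a.isUnit
  have h := exists_mul_pow_add_mul_pow_eq_iff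
    (HeightOneSpectrum.adicCompletionIntegers.integers K v) h3' a a⁻¹ hA'
  simp only [map_units_inv] at h
  rw [exists_add_inv_mul_cube_eq_zero_iff hres, ha,
    exists_residue_algebraMap_eq_pow_iff K v three_ne_zero hα,
    ← IsScalarTower.algebraMap_apply] at h
  exact h

/-- Lemma 2.3, case `q ∤ α`: if `A ∈ ℤ ∖ {0, ±1}` is cube-free,
`α ∈ ℤ[ζ₃]` is a nonzero cube-free integer, and `q` is a prime of `ℤ[ζ₃]` with `q ‖ A`,
`q ∤ 3` and `q ∤ α`, then `C_{A,α}(k_q) ≠ ∅` iff the image of `α` in the residue field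
`ℤ[ζ₃]/(q)` is a nonzero cube. -/
theorem stmt2 (K : Type*) [Field K] [NumberField K] [IsCyclotomicExtension {3} ℚ K]
    (A : ℤ) (hA0 : A ≠ 0) (hA1 : A ≠ 1) (hA1' : A ≠ -1)
    (hAcf : ∀ p : ℤ, Prime p → ¬ p ^ 3 ∣ A)
    (α : 𝓞 K) (hα0 : α ≠ 0) (hαcf : ∀ p : 𝓞 K, Prime p → ¬ p ^ 3 ∣ α)
    (q : 𝓞 K) (hq : Prime q)
    (hqA : q ∣ (A : 𝓞 K)) (hqA2 : ¬ q ^ 2 ∣ (A : 𝓞 K))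
    (hq3 : ¬ q ∣ (3 : 𝓞 K)) (hqα : ¬ q ∣ α) :
    (∃ x y z : (primeSpec hq).adicCompletion K,
        ¬(x = 0 ∧ y = 0 ∧ z = 0) ∧
        algebraMap (𝓞 K) ((primeSpec hq).adicCompletion K) α * x ^ 3
          + (algebraMap (𝓞 K) ((primeSpec hq).adicCompletion K) α)⁻¹ * y ^ 3
          = algebraMap K ((primeSpec hq).adicCompletion K) (A : K) * z ^ 3)
      ↔ ∃ c : 𝓞 K ⧸ Ideal.span {q}, c ≠ 0 ∧
          Ideal.Quotient.mk (Ideal.span {q}) α = c ^ 3 := by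
  have hvA : (primeSpec hq).valuation K (A : K) = WithZero.exp (-1) := by
    simpa using valuation_primeSpec_of_dvd_of_not_sq_dvd K hq hqA hqA2
  exact stmt2_general (primeSpec hq) (fun γ ↦ hvA ▸ exp_neg_one_ne_pow (by decide) γ)
    (mt Ideal.mem_span_singleton.mp hq3) (mt Ideal.mem_span_singleton.mp hqα)
end

section
/- Let p₁, p₂, p₃ be distinct rational primes such that (p₁, p₂, p₃) ≡ (2, 2, 5) (mod 9) or (p₁, p₂, p₃) ≡ (5, 5, 2) (mod 9), and set A = p₁p₂p₃². Then the subset of k*/(k*)³ consisting of the classes [α] of those α ∈ k* for which C_{A,α}(k_q) ≠ ∅ for every prime element q of ℤ[ζ₃] is exactly the subgroup of k*/(k*)³ generated by the classes [A] and [p₁p₂²]. -/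
open NumberField IsDedekindDomain

/-!
At a prime where `A` is a unit, a point of `C_{A,α}` forces `3 ∣ ord α`. As `ℤ[ζ₃]` is principal,
a class `[α]` meeting these conditions is `[u p₁ᵃ p₂ᵇ p₃ᶜ]` with a unit `u`.

The prime `p₁` is inert, `A` is a uniformizer there up to cubes, and `p₂`, `p₃` are cubes. A point
at `p₁` makes `α` a power of `A` modulo cubes, so `u` is a local cube; the residue field has `p₁²`
elements and `9 ∤ p₁² - 1`, so `u` is a global cube. At the prime above `3` there is a `g` with
`p₁ ~ p₂ ~ g` and `p₃ ~ g²` modulo cubes, hence `A ~ 1` and `α ~ g ^ (a + b + 2c)`. The curve of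
`g` has no point there, which gives `3 ∣ a + b + 2c`: these are the exponents of the group generated
by `A` and `B = p₁p₂²`.

Conversely, modulo cubes `B` is `A` at `p₁`, `A²` at `p₂` and `1` at `p₃` and above `3`, so a class
generated by `A` and `B` is locally a power of `A`, whose curve has an obvious point. At the
remaining primes the curve has good reduction and a point over the residue field lifts.
-/

/-- `a` and `b` have the same class modulo cubes of `F*`; `CubeEquiv a 1` says that `a` is a nonzero
cube. -/
def CubeEquiv {F : Type*} [Field F] (a b : F) : Prop := ∃ t ≠ 0, a = b * t ^ 3

namespace CubeEquiv

variable {F : Type*} [Field F] {a b c d g : F}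

lemma of_pow_eq {s : F} (ha : a ≠ 0) (h : s ^ 3 = a) : CubeEquiv a 1 :=
  ⟨s, fun hs ↦ ha (by simp [← h, hs]), by rw [h, one_mul]⟩

lemma refl (a : F) : CubeEquiv a a := ⟨1, one_ne_zero, by simp⟩

lemma symm (h : CubeEquiv a b) : CubeEquiv b a := by
  obtain ⟨t, ht, rfl⟩ := h
  exact ⟨t⁻¹, inv_ne_zero ht, by field_simp⟩

lemma trans (h : CubeEquiv a b) (h' : CubeEquiv b c) : CubeEquiv a c := by
  obtain ⟨t, ht, rfl⟩ := h
  obtain ⟨s, hs, rfl⟩ := h'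
  exact ⟨s * t, mul_ne_zero hs ht, by ring⟩

lemma mul (h : CubeEquiv a b) (h' : CubeEquiv c d) : CubeEquiv (a * c) (b * d) := by
  obtain ⟨t, ht, rfl⟩ := h
  obtain ⟨s, hs, rfl⟩ := h'
  exact ⟨t * s, mul_ne_zero ht hs, by ring⟩

lemma zpow (h : CubeEquiv a b) (n : ℤ) : CubeEquiv (a ^ n) (b ^ n) := by
  obtain ⟨t, ht, rfl⟩ := h
  exact ⟨t ^ n, zpow_ne_zero n ht, by rw [mul_zpow, ← zpow_natCast, zpow_comm, zpow_natCast]⟩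

lemma pow (h : CubeEquiv a b) (n : ℕ) : CubeEquiv (a ^ n) (b ^ n) := mod_cast h.zpow n

lemma inv (h : CubeEquiv a b) : CubeEquiv a⁻¹ b⁻¹ := by simpa using h.zpow (-1)

lemma map {E : Type*} [Field E] (f : F →+* E) (h : CubeEquiv a b) : CubeEquiv (f a) (f b) := by
  obtain ⟨t, ht, rfl⟩ := h
  exact ⟨f t, by simpa, by simp⟩

lemma zpow_of_dvd_sub (hg : g ≠ 0) {i j : ℤ} (h : 3 ∣ i - j) : CubeEquiv (g ^ i) (g ^ j) := by
  obtain ⟨k, hk⟩ := h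
  refine ⟨g ^ k, zpow_ne_zero k hg, ?_⟩
  rw [← zpow_natCast, ← zpow_mul, ← zpow_add₀ hg]
  congr 1
  push_cast
  omega

lemma zpow_trichotomy (hg : g ≠ 0) (i : ℤ) :
    CubeEquiv (g ^ i) 1 ∨ CubeEquiv (g ^ i) g ∨ CubeEquiv (g ^ i) (g ^ 2) := by
  obtain h | h | h : 3 ∣ i - 0 ∨ 3 ∣ i - 1 ∨ 3 ∣ i - 2 := by omega
  · exact .inl (zpow_zero g ▸ zpow_of_dvd_sub hg h)
  · exact .inr (.inl (by simpa using zpow_of_dvd_sub hg h))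
  · exact .inr (.inr (zpow_ofNat g 2 ▸ zpow_of_dvd_sub hg h))

lemma zpow_mul_zpow_of_three_dvd {x y z α : F} (hx : x ≠ 0)
    (hy : y ≠ 0) (hz : z ≠ 0) {a b c : ℤ} (hα : CubeEquiv α (x ^ a * y ^ b * z ^ c))
    (h : 3 ∣ a + b + 2 * c) :
    CubeEquiv α ((x * y * z ^ 2) ^ (2 * a - b) * (x * y ^ 2) ^ (b - a)) := by
  have heq : (x * y * z ^ 2) ^ (2 * a - b) * (x * y ^ 2) ^ (b - a) =
      x ^ a * y ^ b * z ^ (2 * (2 * a - b)) := by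
    rw [show x ^ a = x ^ (2 * a - b) * x ^ (b - a) by rw [← zpow_add₀ hx]; ring_nf,
      show y ^ b = y ^ (2 * a - b) * y ^ (2 * (b - a)) by rw [← zpow_add₀ hy]; ring_nf,
      zpow_mul, zpow_mul, mul_zpow, mul_zpow, mul_zpow]
    norm_cast
    ring
  rw [heq]
  exact hα.trans ((CubeEquiv.refl _).mul (.zpow_of_dvd_sub hz (by omega)))

end CubeEquiv

/-- The plane cubic `a x³ + b y³ = c z³` has a nontrivial point over the field `F`. The curve
`C_{A,α}` is the case `(a, b, c) = (α, α⁻¹, A)`. -/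
def HasCubicPoint {F : Type*} [Field F] (a b c : F) : Prop :=
  ∃ x y z : F, ¬(x = 0 ∧ y = 0 ∧ z = 0) ∧ a * x ^ 3 + b * y ^ 3 = c * z ^ 3

namespace HasCubicPoint

variable {F : Type*} [Field F] {a b c : F}

lemma swap (h : HasCubicPoint a b c) : HasCubicPoint b a c := by
  obtain ⟨x, y, z, hne, h⟩ := h
  exact ⟨y, x, z, by tauto, by rw [add_comm, h]⟩

lemma rotate (h : HasCubicPoint a b c) : HasCubicPoint b c a := by
  obtain ⟨x, y, z, hne, h⟩ := h
  refine ⟨y, -z, -x, ?_, by linear_combination h⟩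
  simp only [neg_eq_zero]
  tauto

lemma congr {a' b' c' : F} (h : HasCubicPoint a b c) (ha : CubeEquiv a a') (hb : CubeEquiv b b')
    (hc : CubeEquiv c c') : HasCubicPoint a' b' c' := by
  obtain ⟨x, y, z, hne, h⟩ := h
  obtain ⟨r, hr, rfl⟩ := ha
  obtain ⟨s, hs, rfl⟩ := hb
  obtain ⟨t, ht, rfl⟩ := hc
  exact ⟨r * x, s * y, t * z, by simpa [hr, hs, ht] using hne, by linear_combination h⟩

lemma mul_right (h : HasCubicPoint a b c) (d : F) :
    HasCubicPoint (a * d) (b * d) (c * d) := by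
  obtain ⟨x, y, z, hne, h⟩ := h
  exact ⟨x, y, z, hne, by linear_combination d * h⟩

lemma of_cubeEquiv (h : CubeEquiv a b) (c : F) : HasCubicPoint a b c := by
  obtain ⟨t, -, h⟩ := h
  exact ⟨1, -t, 0, by simp, by rw [h]; ring⟩

/-- The points are `(1, -1, 0)`, `(1, 0, 1)` and `(0, A, 1)` on the curves of
`α = 1`, `α = A` and `α = A²`. -/
lemma of_cubeEquiv_zpow {α A : F} (hA : A ≠ 0) {m : ℤ} (h : CubeEquiv α (A ^ m)) :
    HasCubicPoint α α⁻¹ A := by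
  suffices ∃ β, CubeEquiv α β ∧ HasCubicPoint β β⁻¹ A by
    obtain ⟨β, hβ, hpt⟩ := this
    exact hpt.congr hβ.symm hβ.symm.inv (.refl A)
  obtain h' | h' | h' := CubeEquiv.zpow_trichotomy hA m
  · exact ⟨1, h.trans h', 1, -1, 0, by simp, by simp; ring⟩
  · exact ⟨A, h.trans h', 1, 0, 1, by simp, by simp⟩
  · exact ⟨A ^ 2, h.trans h', 0, A, 1, by simp, by field_simp; simp⟩

lemma of_zpow {g : F} (hg : g ≠ 0) {j : ℤ}
    (h : HasCubicPoint (g ^ j) (g ^ j)⁻¹ 1) (hj : ¬ 3 ∣ j) : HasCubicPoint g g⁻¹ 1 := by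
  rw [← zpow_neg] at h
  obtain h1 | h1 : 3 ∣ j - 1 ∨ 3 ∣ -j - 1 := by omega
  · simpa using h.congr (.zpow_of_dvd_sub hg h1)
      (.zpow_of_dvd_sub (j := -1) hg (by omega)) (.refl 1)
  · simpa using h.swap.congr (.zpow_of_dvd_sub hg h1)
      (.zpow_of_dvd_sub (j := -1) hg (by omega)) (.refl 1)

lemma of_cubeEquiv_zpow_mul_zpow {α A B : F} (hA : A ≠ 0)
    {k : ℕ} (hB : CubeEquiv B (A ^ k)) {m n : ℤ} (h : CubeEquiv α (A ^ m * B ^ n)) :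
    HasCubicPoint α α⁻¹ A := by
  refine .of_cubeEquiv_zpow (m := m + k * n) hA (h.trans ?_)
  rw [zpow_add₀ hA, zpow_mul, zpow_natCast]
  exact (CubeEquiv.refl _).mul (hB.zpow n)

end HasCubicPoint

lemma exists_eq_zpow_mul_pow_of_isCyclic {G : Type*} [CommGroup G] [IsCyclic G] [Finite G]
    {p : ℕ} [Fact p.Prime] {g : G} (hg : ∀ u : G, g ≠ u ^ p) (a : G) :
    ∃ (i : ℤ) (u : G), a = g ^ i * u ^ p := by
  let H := (powMonoidHom p : G →* G).range
  have hgH : (g : G ⧸ H) ≠ 1 := fun h ↦ by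
    obtain ⟨u, hu⟩ := (QuotientGroup.eq_one_iff g).mp h
    exact hg u hu.symm
  have hcard : Nat.card (G ⧸ H) = p := by
    have hdvd : H.index ∣ p := IsCyclic.index_powMonoidHom_range G p ▸ Nat.gcd_dvd_right _ p
    refine ((Nat.dvd_prime Fact.out).mp hdvd).resolve_left fun h ↦ hgH ?_
    rw [QuotientGroup.eq_one_iff, Subgroup.index_eq_one.mp h]
    trivial
  obtain ⟨i, hi⟩ := Subgroup.mem_zpowers_iff.mp
    (mem_zpowers_of_prime_card hcard hgH : (a : G ⧸ H) ∈ _)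
  obtain ⟨u, hu⟩ := QuotientGroup.eq.mp (hi : ((g ^ i : G) : G ⧸ H) = a)
  exact ⟨i, u, eq_mul_of_inv_mul_eq hu.symm⟩

section FiniteField

variable {F : Type*} [Field F] [Finite F] {g : F}

lemma exists_cubeEquiv_zpow_of_finite (hg : g ≠ 0) (hcube : ¬ CubeEquiv g 1) {a : F}
    (ha : a ≠ 0) : ∃ i : ℤ, CubeEquiv a (g ^ i) := by
  have : Fact (Nat.Prime 3) := ⟨Nat.prime_three⟩
  obtain ⟨i, u, h⟩ := exists_eq_zpow_mul_pow_of_isCyclic (p := 3) (g := Units.mk0 g hg)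
    (fun u hu ↦ hcube (.of_pow_eq hg (by simpa using congrArg Units.val hu.symm))) (Units.mk0 a ha)
  exact ⟨i, u, u.ne_zero, by simpa using congrArg Units.val h⟩

lemma cubeEquiv_trichotomy_of_finite (hg : g ≠ 0) (hcube : ¬ CubeEquiv g 1) {a : F} (ha : a ≠ 0) :
    CubeEquiv a 1 ∨ CubeEquiv a g ∨ CubeEquiv a (g ^ 2) := by
  obtain ⟨i, hi⟩ := exists_cubeEquiv_zpow_of_finite hg hcube ha
  exact (CubeEquiv.zpow_trichotomy hg i).imp hi.trans (.imp hi.trans hi.trans)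

/-- For a noncube `g`, the elements `1 + g h` lie in the three classes `1, g, g²` modulo cubes.
The last one gives a point directly. -/
lemma one_add_cubeEquiv_one (hg : g ≠ 0) (hcube : ¬ CubeEquiv g 1)
    (hpt : ¬ HasCubicPoint 1 g (g ^ 2)) {h : F} (hh : CubeEquiv h 1) :
    ∃ d, (d = g * h ∨ d = (g * h)⁻¹) ∧ CubeEquiv (1 + d) 1 := by
  obtain ⟨s, hs, rfl⟩ := hh
  have hne : 1 + g * (1 * s ^ 3) ≠ 0 := fun h0 ↦
    hpt ⟨1, s, 0, by simp, by linear_combination h0⟩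
  obtain h | ⟨t, ht, h⟩ | ⟨t, -, h⟩ := cubeEquiv_trichotomy_of_finite hg hcube hne
  · exact ⟨_, .inl rfl, h⟩
  · refine ⟨_, .inr rfl, t / s, div_ne_zero ht hs, ?_⟩
    field_simp
    linear_combination h
  · exact absurd ⟨1, s, t, by simp, by linear_combination h⟩ hpt

/-- If there were no point, `h ↦ 1 + d h` (with `d h` as in `one_add_cubeEquiv_one`) would be an
injective self-map of the finite set of nonzero cubes missing the cube `1`. -/
lemma hasCubicPoint_one_self_sq_of_finite (hg : g ≠ 0) : HasCubicPoint 1 g (g ^ 2) := by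
  by_cases hcube : CubeEquiv g 1
  · exact .of_cubeEquiv hcube.symm _
  by_contra hpt
  let C : Set F := {h | CubeEquiv h 1}
  have hne : ∀ {h}, h ∈ C → h ≠ 0 := by
    rintro _ ⟨s, hs, rfl⟩
    simpa using hs
  choose! d hd hdC using fun h (hh : h ∈ C) ↦ one_add_cubeEquiv_one hg hcube hpt hh
  have hmul : ∀ {h h'}, h ∈ C → h' ∈ C → g * h ≠ (g * h')⁻¹ := by
    rintro _ _ ⟨s, -, rfl⟩ ⟨s', hs', rfl⟩ h
    refine hcube (.of_pow_eq (s := g * s * s') hg ?_)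
    field_simp at h
    linear_combination g * h
  have hinj : Set.InjOn (fun h ↦ 1 + d h) C := fun h hh h' hh' he ↦ by
    rcases hd h hh with hd₁ | hd₁ <;> rcases hd h' hh' with hd₂ | hd₂ <;>
      simp only [hd₁, hd₂, add_right_inj] at he
    · exact mul_left_cancel₀ hg he
    · exact absurd he (hmul hh hh')
    · exact absurd he.symm (hmul hh' hh)
    · exact mul_left_cancel₀ hg (inv_injective he)
  have hsurj := ((Set.toFinite C).injOn_iff_bijOn_of_mapsTo hdC).mp hinj |>.surjOn
  obtain ⟨h, hh, he⟩ := hsurj (CubeEquiv.refl (1 : F) : 1 ∈ C)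
  have hd0 : d h = 0 := by simpa using he
  rcases hd h hh with h' | h' <;> simp [h', hg, hne hh] at hd0

lemma hasCubicPoint_of_finite {a b c : F} (ha : a ≠ 0) (hb : b ≠ 0) (hc : c ≠ 0) :
    HasCubicPoint a b c := by
  suffices HasCubicPoint 1 (b / a) (c / a) by
    simpa [ha] using this.mul_right a
  have hg : b / a ≠ 0 := div_ne_zero hb ha
  by_cases hcube : CubeEquiv (b / a) 1
  · exact .of_cubeEquiv hcube.symm _
  obtain h | h | h := cubeEquiv_trichotomy_of_finite hg hcube (div_ne_zero hc ha)
  · exact .rotate (.swap (.of_cubeEquiv h.symm _))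
  · exact .rotate (.rotate (.of_cubeEquiv h.symm _))
  · exact (hasCubicPoint_one_self_sq_of_finite hg).congr (.refl _) (.refl _) h.symm

end FiniteField

section Ultrametric

lemma norm_add_le_of_le_of_ultrametric {E : Type*} [SeminormedAddGroup E] [IsUltrametricDist E]
    {x y : E} {r : ℝ} (hx : ‖x‖ ≤ r) (hy : ‖y‖ ≤ r) : ‖x + y‖ ≤ r :=
  (IsUltrametricDist.norm_add_le_max x y).trans (max_le hx hy)

variable {L : Type*} [NormedField L] [IsUltrametricDist L]

lemma norm_sub_three_mul_le {m t : L} (hm : ‖m‖ ≤ 1) (ht : ‖t‖ ≤ ‖m‖) :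
    ‖m - 3 * t ^ 2 - 3 * t ^ 3‖ ≤ ‖m‖ := by
  have h3 : ‖(-3 : L)‖ ≤ 1 := by simpa using IsUltrametricDist.norm_natCast_le_one L 3
  have hsq : ‖-3 * (t * (1 + t)) * t‖ ≤ ‖m‖ := by
    rw [norm_mul]
    refine (mul_le_of_le_one_left (norm_nonneg _) ?_).trans ht
    rw [norm_mul, norm_mul]
    exact mul_le_one₀ h3 (by positivity) (mul_le_one₀ (ht.trans hm) (norm_nonneg _)
      (norm_add_le_of_le_of_ultrametric norm_one.le (ht.trans hm)))
  rw [show m - 3 * t ^ 2 - 3 * t ^ 3 = m + -3 * (t * (1 + t)) * t by ring]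
  exact norm_add_le_of_le_of_ultrametric le_rfl hsq

lemma norm_sub_three_mul_sub_le {m t s : L} (hm : ‖m‖ ≤ 1) (ht : ‖t‖ ≤ ‖m‖) (hs : ‖s‖ ≤ ‖m‖) :
    ‖(m - 3 * t ^ 2 - 3 * t ^ 3) - (m - 3 * s ^ 2 - 3 * s ^ 3)‖ ≤ ‖m‖ * ‖t - s‖ := by
  have h3 : ‖(-3 : L)‖ ≤ 1 := by simpa using IsUltrametricDist.norm_natCast_le_one L 3
  have hmul {x y : L} (hx : ‖x‖ ≤ ‖m‖) (hy : ‖y‖ ≤ ‖m‖) : ‖x * y‖ ≤ ‖m‖ := by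
    rw [norm_mul]
    exact (mul_le_of_le_one_left (norm_nonneg _) (hx.trans hm)).trans hy
  have hfactor : (m - 3 * t ^ 2 - 3 * t ^ 3) - (m - 3 * s ^ 2 - 3 * s ^ 3) =
      -3 * (t + s + (t * t + t * s + s * s)) * (t - s) := by ring
  rw [hfactor, norm_mul, norm_mul]
  gcongr
  refine (mul_le_of_le_one_left (norm_nonneg _) h3).trans ?_
  exact norm_add_le_of_le_of_ultrametric (norm_add_le_of_le_of_ultrametric ht hs)
    (norm_add_le_of_le_of_ultrametric
      (norm_add_le_of_le_of_ultrametric (hmul ht ht) (hmul ht hs)) (hmul hs hs))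

/-- With `s = 1 + 3t` and `w = 1 + 9m`, the equation `s³ = w` reads `t = m - 3t² - 3t³`, and the
right-hand side is a contraction of the ball of radius `‖m‖ < 1`. -/
lemma exists_cube_eq_of_norm_sub_one_lt [CompleteSpace L] {w : L}
    (hw : ‖w - 1‖ < ‖(9 : L)‖) : ∃ s, s ^ 3 = w := by
  have h9 : (9 : L) ≠ 0 := norm_pos_iff.mp ((norm_nonneg _).trans_lt hw)
  obtain ⟨m, rfl⟩ : ∃ m, w = 1 + 9 * m := ⟨(w - 1) / 9, by field_simp; ring⟩
  have hm : ‖m‖ < 1 := by simpa [h9] using hw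
  have hmaps : Set.MapsTo (fun t ↦ m - 3 * t ^ 2 - 3 * t ^ 3)
      (Metric.closedBall 0 ‖m‖) (Metric.closedBall 0 ‖m‖) := fun t ht ↦ by
    rw [mem_closedBall_zero_iff] at ht ⊢
    exact norm_sub_three_mul_le hm.le ht
  have hlip : ContractingWith ⟨‖m‖, norm_nonneg m⟩ (hmaps.restrict _ _ _) := by
    refine ⟨hm, LipschitzWith.of_dist_le_mul fun ⟨t, ht⟩ ⟨s, hs⟩ ↦ ?_⟩
    rw [mem_closedBall_zero_iff] at ht hs
    rw [Subtype.dist_eq, Subtype.dist_eq, dist_eq_norm, dist_eq_norm]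
    exact norm_sub_three_mul_sub_le hm.le ht hs
  obtain ⟨t, -, ht, -⟩ := hlip.exists_fixedPoint' Metric.isClosed_closedBall.isComplete hmaps
    (Metric.mem_closedBall_self (norm_nonneg m)) (edist_ne_top _ _)
  have ht : m - 3 * t ^ 2 - 3 * t ^ 3 = t := ht
  exact ⟨1 + 3 * t, by linear_combination -9 * ht⟩

end Ultrametric

section Valuation

open WithZero Valuation

variable {L : Type*} [Field L] (v : Valuation L ℤᵐ⁰) {a b c : L}

lemma log_valuation_mul_cube (ha : a ≠ 0) {x : L} (hx : x ≠ 0) :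
    log (v (a * x ^ 3)) = log (v a) + 3 * log (v x) := by
  rw [map_mul, map_pow, log_mul (by simpa) (by simpa), log_pow, nsmul_eq_mul, Nat.cast_ofNat]

lemma three_dvd_log_valuation_sub (ha : a ≠ 0) (hc : c ≠ 0) {x z : L} (hxz : ¬(x = 0 ∧ z = 0))
    (h : v (a * x ^ 3) = v (c * z ^ 3)) : 3 ∣ log (v a) - log (v c) := by
  have hzero : x = 0 ↔ z = 0 := by
    simpa [ha, hc] using congrArg (· = 0) h
  have hx : x ≠ 0 := fun hx ↦ hxz ⟨hx, hzero.mp hx⟩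
  have hlog := congrArg log h
  rw [log_valuation_mul_cube v ha hx, log_valuation_mul_cube v hc (hzero.not.mp hx)] at hlog
  omega

lemma HasCubicPoint.exists_valuation_one_add_lt_one (ha : a ≠ 0) (hb : b ≠ 0) (hc : c ≠ 0)
    (h : HasCubicPoint a b c) (hac : ¬ 3 ∣ log (v a) - log (v c))
    (hbc : ¬ 3 ∣ log (v b) - log (v c)) : ∃ t, v (1 + b / a * t ^ 3) < 1 := by
  obtain ⟨x, y, z, hne, heq⟩ := h
  have hax : ¬(x = 0 ∧ z = 0) → v (a * x ^ 3) ≠ v (c * z ^ 3) :=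
    fun hxz h ↦ hac (three_dvd_log_valuation_sub v ha hc hxz h)
  have hby : ¬(y = 0 ∧ z = 0) → v (b * y ^ 3) ≠ v (c * z ^ 3) :=
    fun hyz h ↦ hbc (three_dvd_log_valuation_sub v hb hc hyz h)
  have hx : x ≠ 0 := by
    rintro rfl
    exact hby (by tauto) (by rw [← heq]; simp)
  have hlt : v (c * z ^ 3) < v (a * x ^ 3) := by
    refine lt_of_le_of_ne (not_lt.mp fun hlt ↦ hby ?_ ?_) (hax (by tauto)).symm
    · rintro ⟨-, rfl⟩
      simp at hlt
    · rw [← map_sub_eq_of_lt_right v hlt, ← heq, Valuation.map_sub_swap]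
      congr 1
      ring
  refine ⟨y / x, ?_⟩
  have hmul : 1 + b / a * (y / x) ^ 3 = c * z ^ 3 / (a * x ^ 3) := by
    rw [← heq]
    field_simp
  rwa [hmul, map_div₀, div_lt_one₀ (by simpa [zero_lt_iff] using ⟨ha, hx⟩)]

lemma three_dvd_log_valuation_of_one_add_mul_cube {g t : L} (hg : g ≠ 0)
    (h : v (1 + g * t ^ 3) < 1) : 3 ∣ log (v g) := by
  have hone : v (g * t ^ 3) = v (1 * 1 ^ 3) := by
    have hlt : v (1 + g * t ^ 3) < v 1 := by rwa [map_one]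
    rw [one_pow, one_mul, ← map_sub_eq_of_lt_right v hlt]
    congr 1
    ring
  simpa using three_dvd_log_valuation_sub v hg one_ne_zero (by simp) hone

lemma HasCubicPoint.three_dvd_log_valuation (ha : a ≠ 0) (hb : b ≠ 0) (hc : c ≠ 0)
    (h : HasCubicPoint a b c) : 3 ∣ log (v a) - log (v b) ∨ 3 ∣ log (v a) - log (v c) ∨
      3 ∣ log (v b) - log (v c) := by
  by_contra! hcon
  obtain ⟨hab, hac, hbc⟩ := hcon
  obtain ⟨t, ht⟩ := h.exists_valuation_one_add_lt_one v ha hb hc hac hbc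
  have hdvd := three_dvd_log_valuation_of_one_add_mul_cube v (div_ne_zero hb ha) ht
  rw [map_div₀, log_div (by simpa) (by simpa)] at hdvd
  omega

lemma HasCubicPoint.three_dvd_log_valuation_of_dvd {α A : L} (hα : α ≠ 0) (hA : A ≠ 0)
    (h : HasCubicPoint α α⁻¹ A) (hdvd : 3 ∣ log (v A)) : 3 ∣ log (v α) := by
  have := h.three_dvd_log_valuation v hα (inv_ne_zero hα) hA
  rw [map_inv₀, log_inv] at this
  omega

end Valuation

section AdicCompletion

open HeightOneSpectrum IsLocalRing

variable {R : Type*} [CommRing R] [IsDedekindDomain R]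
  {K : Type*} [Field K] [Algebra R K] [IsFractionRing R K] (v : HeightOneSpectrum R)

lemma valued_algebraMap (k : K) :
    Valued.v (algebraMap K (v.adicCompletion K) k) = v.valuation K k :=
  valuedAdicCompletion_eq_valuation' v k

lemma valued_algebraMap_integer (r : R) :
    Valued.v (algebraMap R (v.adicCompletion K) r) = v.intValuation r := by
  rw [IsScalarTower.algebraMap_apply R K, valued_algebraMap, valuation_of_algebraMap]

lemma residue_eq_zero_iff_valued_lt_one {x : v.adicCompletionIntegers K} :
    residue _ x = 0 ↔ Valued.v (x : v.adicCompletion K) < 1 := by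
  rw [residue_eq_zero_iff]
  exact Valued.v.mem_maximalIdeal_iff

lemma residue_algebraMap_eq_zero_iff {r : R} :
    residue (v.adicCompletionIntegers K) (algebraMap R _ r) = 0 ↔ r ∈ v.asIdeal := by
  rw [residue_eq_zero_iff_valued_lt_one, ← intValuation_lt_one_iff_mem]
  exact (valued_algebraMap_integer (K := K) v r).symm ▸ Iff.rfl

lemma exists_valued_algebraMap_sub_lt (x : v.adicCompletion K) :
    ∃ k : K, Valued.v (algebraMap K _ k - x) < 1 := by
  have hball : {y | Valued.v (y - x) < 1} ∈ nhds x :=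
    Valued.mem_nhds.mpr ⟨1, fun y hy ↦ by simpa [← Valued.v.restrict_lt_iff] using hy⟩
  obtain ⟨_, hk, k, rfl⟩ :=
    mem_closure_iff_nhds.mp (denseRange_algebraMap (K := K) v x) _ hball
  exact ⟨k, hk⟩

lemma exists_residue_eq_residue_algebraMap (x : v.adicCompletionIntegers K) :
    ∃ r : R, residue _ (algebraMap R _ r) = residue _ x := by
  obtain ⟨k, hk⟩ := exists_valued_algebraMap_sub_lt v (x : v.adicCompletion K)
  have hk1 : v.valuation K k ≤ 1 := by
    rw [← valued_algebraMap, ← sub_add_cancel (algebraMap K _ k) (x : v.adicCompletion K)]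
    exact Valuation.map_add_le _ hk.le x.2
  obtain ⟨r, hr⟩ := exists_valuation_sub_lt_of_integer v hk1 1
  refine ⟨r, ?_⟩
  rw [← sub_eq_zero, ← map_sub, residue_eq_zero_iff_valued_lt_one]
  rw [← valued_algebraMap, map_sub, Units.val_one] at hr
  convert Valuation.map_add_lt _ hr hk
  rw [sub_add_sub_cancel, ← IsScalarTower.algebraMap_apply]
  rfl

end AdicCompletion

lemma intCast_mem_ideal_iff_dvd {R : Type*} [CommRing R] {I : Ideal R} (hI : I ≠ ⊤) {p : ℕ}
    (hp : p.Prime) (hpI : (p : R) ∈ I) {n : ℤ} : (n : R) ∈ I ↔ (p : ℤ) ∣ n := by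
  refine ⟨fun hn ↦ ?_, ?_⟩
  · by_contra hdvd
    obtain ⟨a, b, hab⟩ := (Nat.prime_iff_prime_int.mp hp).coprime_iff_not_dvd.mpr hdvd
    refine hI ((Ideal.eq_top_iff_one I).mpr ?_)
    have hone : (a : R) * p + b * n = 1 := mod_cast congrArg (Int.cast : ℤ → R) hab
    exact hone ▸ I.add_mem (I.mul_mem_left _ hpI) (I.mul_mem_left _ hn)
  · rintro ⟨m, rfl⟩
    push_cast
    exact I.mul_mem_right _ hpI

lemma natCast_mem_ideal_iff_dvd {R : Type*} [CommRing R] {I : Ideal R} (hI : I ≠ ⊤) {p : ℕ}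
    (hp : p.Prime) (hpI : (p : R) ∈ I) {n : ℕ} : (n : R) ∈ I ↔ p ∣ n := by
  rw [← Int.cast_natCast, intCast_mem_ideal_iff_dvd hI hp hpI, Int.natCast_dvd_natCast]

lemma exists_dvd_sub_cube {p n : ℕ} (hp : p.Prime) (hp2 : p % 3 = 2) (hn : ¬ p ∣ n) :
    ∃ m : ℕ, ¬ p ∣ m ∧ (p : ℤ) ∣ n - m ^ 3 := by
  have : Fact p.Prime := ⟨hp⟩
  have hcop : (Nat.card (ZMod p)ˣ).Coprime 3 := by
    rw [Nat.card_units, Nat.card_zmod, Nat.coprime_comm, Nat.prime_three.coprime_iff_not_dvd]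
    omega
  have hn' : (n : ZMod p) ≠ 0 := by rwa [Ne, ZMod.natCast_eq_zero_iff]
  obtain ⟨u, hu⟩ := (powCoprime hcop).surjective (Units.mk0 (n : ZMod p) hn')
  have hu : (u : ZMod p) ^ 3 = n := by simpa using congrArg Units.val hu
  have hval : ((u : ZMod p).val : ZMod p) = u := ZMod.natCast_zmod_val _
  refine ⟨(u : ZMod p).val, ?_, ?_⟩
  · rw [← ZMod.natCast_eq_zero_iff, hval]
    exact u.ne_zero
  · rw [← ZMod.intCast_zmod_eq_zero_iff_dvd]
    push_cast
    rw [hval, hu, sub_self]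

lemma three_notMem_of_natCast_mem {R : Type*} [CommRing R] {I : Ideal R} (hI : I ≠ ⊤) {p : ℕ}
    (hp : p.Prime) (hp2 : p % 3 = 2) (hpI : (p : R) ∈ I) : 3 ∉ I := fun h ↦ by
  have := (Nat.prime_dvd_prime_iff_eq hp Nat.prime_three).mp
    ((natCast_mem_ideal_iff_dvd hI hp hpI).mp (mod_cast h))
  omega

section NumberField

open HeightOneSpectrum IsLocalRing WithZero

variable {K : Type*} [Field K] [NumberField K] {v : HeightOneSpectrum (𝓞 K)}

lemma exists_cube_eq_of_valued_sub_one_lt {w : v.adicCompletion K}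
    (hw : Valued.v (w - 1) < Valued.v (9 : v.adicCompletion K)) : ∃ s, s ^ 3 = w :=
  exists_cube_eq_of_norm_sub_one_lt (Valued.toNormedField.norm_lt_iff.mpr hw)

instance charZero_adicCompletion : CharZero (v.adicCompletion K) :=
  charZero_of_injective_algebraMap (algebraMap K _).injective

lemma valued_intCast (n : ℤ) : Valued.v (n : v.adicCompletion K) = v.intValuation (n : 𝓞 K) := by
  have h := valued_algebraMap_integer (K := K) v (n : 𝓞 K)
  rwa [map_intCast] at h

lemma valued_intCast_le_one (n : ℤ) : Valued.v (n : v.adicCompletion K) ≤ 1 := by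
  rw [valued_intCast]
  exact v.intValuation_le_one n

lemma valued_natCast (n : ℕ) : Valued.v (n : v.adicCompletion K) = v.intValuation (n : 𝓞 K) :=
  mod_cast valued_intCast (v := v) n

lemma valued_natCast_eq_one {n : ℕ} (hn : (n : 𝓞 K) ∉ v.asIdeal) :
    Valued.v (n : v.adicCompletion K) = 1 := by
  rw [valued_natCast, intValuation_eq_one_iff.mpr hn]

lemma cubeEquiv_one_of_valued_sub_one_lt_one (h3 : 3 ∉ v.asIdeal) {w : v.adicCompletion K}
    (hw : Valued.v (w - 1) < 1) : CubeEquiv w 1 := by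
  have h9 : ((9 : ℕ) : 𝓞 K) ∉ v.asIdeal := fun h ↦
    h3 (v.isPrime.mem_of_pow_mem 2 (by norm_num at h ⊢; exact h))
  have hv9 : Valued.v (9 : v.adicCompletion K) = 1 := mod_cast valued_natCast_eq_one h9
  obtain ⟨s, hs⟩ := exists_cube_eq_of_valued_sub_one_lt (hv9 ▸ hw)
  exact .of_pow_eq (by rintro rfl; simp at hw) hs

lemma cubeEquiv_one_of_one_add_mul_cube (h3 : 3 ∉ v.asIdeal) {g t : v.adicCompletion K}
    (h : Valued.v (1 + g * t ^ 3) < 1) : CubeEquiv g 1 := by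
  obtain ⟨s, hs, hst⟩ := cubeEquiv_one_of_valued_sub_one_lt_one (w := -(g * t ^ 3)) h3 (by
    rwa [← Valuation.map_neg, neg_sub, sub_neg_eq_add])
  have ht : t ≠ 0 := fun ht ↦ pow_ne_zero 3 hs (by simpa [ht] using hst.symm)
  refine ⟨-s / t, div_ne_zero (neg_ne_zero.mpr hs) ht, ?_⟩
  field_simp
  linear_combination -hst

lemma HasCubicPoint.cubeEquiv_of_not_dvd (h3 : 3 ∉ v.asIdeal) {a b c : v.adicCompletion K}
    (ha : a ≠ 0) (hb : b ≠ 0) (hc : c ≠ 0) (h : HasCubicPoint a b c)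
    (hac : ¬ 3 ∣ log (Valued.v a) - log (Valued.v c))
    (hbc : ¬ 3 ∣ log (Valued.v b) - log (Valued.v c)) : CubeEquiv b a := by
  obtain ⟨t, ht⟩ := h.exists_valuation_one_add_lt_one Valued.v ha hb hc hac hbc
  have hmul := (CubeEquiv.refl a).mul (cubeEquiv_one_of_one_add_mul_cube h3 ht)
  rwa [mul_one, mul_div_cancel₀ b ha] at hmul

/-- Two of the orders of `α`, `α⁻¹`, `A` agree modulo `3`, and the ratio of the two corresponding
coefficients is a cube. -/
lemma HasCubicPoint.exists_cubeEquiv_zpow (h3 : 3 ∉ v.asIdeal) {α A : v.adicCompletion K}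
    (hα : α ≠ 0) (hA : A ≠ 0) (h : HasCubicPoint α α⁻¹ A) (hdvd : ¬ 3 ∣ log (Valued.v A)) :
    ∃ m : ℤ, CubeEquiv α (A ^ m) := by
  have hinv : log (Valued.v α⁻¹) = -log (Valued.v α) := by rw [map_inv₀, log_inv]
  have hα' := inv_ne_zero hα
  obtain hd | hd | hd := h.three_dvd_log_valuation Valued.v hα hα' hA
  · obtain ⟨s, hs, h⟩ := h.cubeEquiv_of_not_dvd h3 hα hα' hA (by omega) (by omega)
    refine ⟨0, α * s, mul_ne_zero hα hs, ?_⟩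
    field_simp at h ⊢
    linear_combination h
  · exact ⟨1, by simpa using
      (h.swap.rotate.cubeEquiv_of_not_dvd h3 hα hA hα' (by omega) (by omega)).symm⟩
  · exact ⟨-1, by simpa using
      (h.rotate.cubeEquiv_of_not_dvd h3 hα' hA hα (by omega) (by omega)).symm.inv⟩

instance finite_residueField : Finite (ResidueField (v.adicCompletionIntegers K)) := by
  have : Finite (𝓞 K ⧸ v.asIdeal) := Ideal.finiteQuotientOfFreeOfNeBot _ v.ne_bot
  let f : 𝓞 K →+* ResidueField (v.adicCompletionIntegers K) := (residue _).comp (algebraMap _ _)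
  refine .of_surjective (Ideal.Quotient.lift v.asIdeal f
    fun r hr ↦ (residue_algebraMap_eq_zero_iff v).mpr hr) fun x ↦ ?_
  obtain ⟨x, rfl⟩ := residue_surjective x
  obtain ⟨r, hr⟩ := exists_residue_eq_residue_algebraMap v x
  exact ⟨Ideal.Quotient.mk _ r, hr⟩

lemma HasCubicPoint.of_valued_lt_one (h3 : 3 ∉ v.asIdeal) {a b c x y z : v.adicCompletion K}
    (ha : Valued.v a = 1) (hx : Valued.v x = 1)
    (h : Valued.v (a * x ^ 3 + b * y ^ 3 - c * z ^ 3) < 1) : HasCubicPoint a b c := by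
  have ha0 : a ≠ 0 := by rintro rfl; simp at ha
  have hx0 : x ≠ 0 := by rintro rfl; simp at hx
  obtain ⟨s, hs, hst⟩ := cubeEquiv_one_of_valued_sub_one_lt_one h3
    (w := (c * z ^ 3 - b * y ^ 3) / (a * x ^ 3)) (by
      rw [← Valuation.map_neg]
      convert h using 1
      trans Valued.v ((a * x ^ 3 + b * y ^ 3 - c * z ^ 3) / (a * x ^ 3))
      · congr 1
        field_simp
        ring
      · simp [ha, hx])
  refine ⟨x * s, y, z, by simp [hx0, hs], ?_⟩
  rw [mul_pow, ← one_mul (s ^ 3), ← hst]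
  field_simp
  ring

/-- A plane cubic of good reduction has a point over the finite residue field, which lifts by
Hensel's lemma. -/
lemma hasCubicPoint_of_valued_eq_one (h3 : 3 ∉ v.asIdeal) {a b c : v.adicCompletion K}
    (ha : Valued.v a = 1) (hb : Valued.v b = 1) (hc : Valued.v c = 1) : HasCubicPoint a b c := by
  have hres {u : v.adicCompletionIntegers K} :
      residue _ u ≠ 0 ↔ Valued.v (u : v.adicCompletion K) = 1 := by
    rw [Ne, residue_eq_zero_iff_valued_lt_one, not_lt]
    exact ⟨u.2.antisymm, ge_of_eq⟩
  lift a to v.adicCompletionIntegers K using ha.le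
  lift b to v.adicCompletionIntegers K using hb.le
  lift c to v.adicCompletionIntegers K using hc.le
  obtain ⟨x, y, z, hne, h⟩ :=
    hasCubicPoint_of_finite (hres.mpr ha) (hres.mpr hb) (hres.mpr hc)
  obtain ⟨x, rfl⟩ := residue_surjective x
  obtain ⟨y, rfl⟩ := residue_surjective y
  obtain ⟨z, rfl⟩ := residue_surjective z
  simp only [← map_pow, ← map_mul, ← map_add] at h
  rw [← sub_eq_zero, ← map_sub, residue_eq_zero_iff_valued_lt_one] at h
  push_cast at h
  by_cases hx : residue _ x = 0
  · by_cases hy : residue _ y = 0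
    · have hz : residue _ z ≠ 0 := fun hz ↦ hne ⟨hx, hy, hz⟩
      refine .rotate (.of_valued_lt_one (x := z) (y := -x) (z := y) h3 hc (hres.mp hz) ?_)
      rw [← Valuation.map_neg]
      convert h using 2
      ring
    · refine .rotate (.rotate ?_)
      refine .of_valued_lt_one (x := y) (y := -z) (z := -x) h3 hb (hres.mp hy) ?_
      convert h using 2
      ring
  · exact .of_valued_lt_one h3 ha (hres.mp hx) h

lemma natCast_cubeEquiv_one {p n : ℕ} (hp : p.Prime) (hp2 : p % 3 = 2)
    (hv : (p : 𝓞 K) ∈ v.asIdeal) (hn : ¬ p ∣ n) : CubeEquiv (n : v.adicCompletion K) 1 := by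
  have hI := v.isPrime.ne_top
  obtain ⟨m, hm, hdvd⟩ := exists_dvd_sub_cube hp hp2 hn
  have hvm : Valued.v (m : v.adicCompletion K) = 1 :=
    valued_natCast_eq_one ((natCast_mem_ideal_iff_dvd hI hp hv).not.mpr hm)
  have hm0 : (m : v.adicCompletion K) ≠ 0 := by intro h; simp [h] at hvm
  have hsub := (intCast_mem_ideal_iff_dvd hI hp hv).mpr hdvd
  rw [← intValuation_lt_one_iff_mem, ← valued_intCast] at hsub
  push_cast at hsub
  have hdiv : CubeEquiv (n / (m : v.adicCompletion K) ^ 3) 1 := by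
    refine cubeEquiv_one_of_valued_sub_one_lt_one (three_notMem_of_natCast_mem hI hp hp2 hv) ?_
    rw [div_sub_one (pow_ne_zero 3 hm0)]
    simpa [hvm] using hsub
  refine CubeEquiv.trans ⟨m, hm0, ?_⟩ hdiv
  field_simp

end NumberField

lemma pow_three_eq_one_of_pow_nine_eq_one {F : Type*} [Field F] [Finite F]
    (hF : ¬ 9 ∣ Nat.card F - 1) {y : F} (hy : y ^ 9 = 1) : y ^ 3 = 1 := by
  have := Fintype.ofFinite F
  have hy0 : y ≠ 0 := by rintro rfl; simp at hy
  by_contra hne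
  have hord : orderOf y = 3 ^ (1 + 1) := orderOf_eq_prime_pow (by simpa) (by simpa)
  refine hF ((show 3 ^ (1 + 1) = 9 by norm_num) ▸ hord ▸ orderOf_dvd_of_pow_eq_one ?_)
  rw [Nat.card_eq_fintype_card]
  exact FiniteField.pow_card_sub_one_eq_one y hy0

lemma eq_one_of_pow_three_eq_one_of_sub_one_mem {R : Type*} [CommRing R] [NoZeroDivisors R]
    {I : Ideal R} (h3 : 3 ∉ I) {x : R} (hx : x ^ 3 = 1) (hI : x - 1 ∈ I) : x = 1 := by
  have hfactor : (x - 1) * (x ^ 2 + x + 1) = 0 := by linear_combination hx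
  refine sub_eq_zero.mp ((mul_eq_zero.mp hfactor).resolve_right fun h ↦ h3 ?_)
  rw [show (3 : R) = -(x + 2) * (x - 1) by linear_combination h]
  exact I.mul_mem_left _ hI

lemma exists_cube_sub_mem {R : Type*} [CommRing R] [IsDedekindDomain R] {K : Type*} [Field K]
    [Algebra R K] [IsFractionRing R K] (v : HeightOneSpectrum R) {a : R}
    (h : CubeEquiv (algebraMap R (v.adicCompletion K) a) 1) : ∃ r, r ^ 3 - a ∈ v.asIdeal := by
  obtain ⟨s, -, hs⟩ := h
  rw [one_mul] at hs
  have hs1 : Valued.v s ≤ 1 := by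
    rw [← pow_le_one_iff three_ne_zero, ← map_pow, ← hs, valued_algebraMap_integer]
    exact v.intValuation_le_one a
  lift s to v.adicCompletionIntegers K using hs1
  obtain ⟨r, hr⟩ := exists_residue_eq_residue_algebraMap v s
  refine ⟨r, ?_⟩
  rw [← residue_algebraMap_eq_zero_iff (K := K) v, map_sub, map_sub, map_pow, map_pow, hr,
    ← map_pow, sub_eq_zero]
  exact congrArg _ (Subtype.ext hs.symm)

section Eisenstein

open HeightOneSpectrum

lemma liesOver_span_of_natCast_mem {R : Type*} [CommRing R] {I : Ideal R} (hI : I ≠ ⊤) {p : ℕ}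
    (hp : p.Prime) (hpI : (p : R) ∈ I) : I.LiesOver (Ideal.span {(p : ℤ)}) := by
  refine ⟨Ideal.ext fun n ↦ ?_⟩
  rw [Ideal.mem_span_singleton, ← intCast_mem_ideal_iff_dvd hI hp hpI]
  simp [Ideal.mem_comap]

variable {K : Type*} [Field K] [NumberField K] [IsCyclotomicExtension {3} ℚ K]
  {v : HeightOneSpectrum (𝓞 K)} {p : ℕ}

lemma absNorm_eq_sq_of_natCast_mem (hp : p.Prime) (hp2 : p % 3 = 2)
    (hv : (p : 𝓞 K) ∈ v.asIdeal) : Ideal.absNorm v.asIdeal = p ^ 2 := by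
  have : Fact p.Prime := ⟨hp⟩
  have := Fact.mk Nat.prime_two
  have := liesOver_span_of_natCast_mem v.isPrime.ne_top hp hv
  have hp3 : (p : ZMod 3) = 2 := mod_cast (ZMod.natCast_eq_natCast_iff' p 2 3).mpr hp2
  have hdeg : v.asIdeal.inertiaDeg ℤ = orderOf (p : ZMod 3) :=
    IsCyclotomicExtension.Rat.inertiaDeg_eq_of_not_dvd p K v.asIdeal fun h ↦ by
      have := (Nat.prime_dvd_prime_iff_eq hp Nat.prime_three).mp h
      omega
  rw [← Ideal.pow_inertiaDeg p v.asIdeal, hdeg, hp3,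
    orderOf_eq_prime (p := 2) (by decide) (by decide)]

lemma asIdeal_eq_span_natCast (hp : p.Prime) (hp2 : p % 3 = 2)
    (hv : (p : 𝓞 K) ∈ v.asIdeal) : v.asIdeal = Ideal.span {(p : 𝓞 K)} := by
  obtain ⟨J, hJ⟩ := Ideal.dvd_span_singleton.mpr hv
  have hnorm := congrArg Ideal.absNorm hJ
  rw [map_mul, absNorm_eq_sq_of_natCast_mem hp hp2 hv, Ideal.absNorm_span_natCast,
    RingOfIntegers.rank, IsCyclotomicExtension.finrank (n := 3) K
      (Polynomial.cyclotomic.irreducible_rat (by norm_num))] at hnorm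
  have hJ1 : Ideal.absNorm J = 1 := by
    rw [Nat.totient_prime Nat.prime_three] at hnorm
    exact (Nat.eq_of_mul_eq_mul_left (pow_pos hp.pos 2) (by simpa using hnorm)).symm
  rw [hJ, Ideal.absNorm_eq_one_iff.mp hJ1, Ideal.mul_top]

lemma units_pow_six_eq_one (u : (𝓞 K)ˣ) : u ^ 6 = 1 := by
  have hζ := IsCyclotomicExtension.zeta_spec 3 ℚ K
  have := IsCyclotomicExtension.Rat.Three.Units.mem hζ u
  have hη : hζ.toInteger ^ 6 = 1 := by
    rw [show 6 = 3 * 2 from rfl, pow_mul, hζ.toInteger_cube_eq_one, one_pow]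
  have hη' : hζ.toInteger ^ 12 = 1 := by rw [show 12 = 6 * 2 from rfl, pow_mul, hη, one_pow]
  simp only [List.mem_cons, List.not_mem_nil, or_false] at this
  ext
  rcases this with rfl | rfl | rfl | rfl | rfl | rfl <;>
    simp [hη, hη', ← pow_mul, Even.neg_pow (by decide : Even 6)]

/-- The residue field has `p²` elements and `9 ∤ p² - 1`, so it contains no primitive ninth root
of unity. -/
lemma cubeEquiv_one_of_units_of_natCast_mem (hp : p.Prime) (hp9 : p % 9 = 2 ∨ p % 9 = 5)
    (hv : (p : 𝓞 K) ∈ v.asIdeal) {u : (𝓞 K)ˣ}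
    (hu : CubeEquiv (algebraMap (𝓞 K) (v.adicCompletion K) u) 1) :
    CubeEquiv (algebraMap (𝓞 K) K u) 1 := by
  have hp2 : p % 3 = 2 := by omega
  have h3 := three_notMem_of_natCast_mem v.isPrime.ne_top hp hp2 hv
  have hu6 : (u : 𝓞 K) ^ 6 = 1 := by rw [← Units.val_pow_eq_pow_val, units_pow_six_eq_one u]; rfl
  have hcard : Nat.card (𝓞 K ⧸ v.asIdeal) = p ^ 2 := by
    rw [← absNorm_eq_sq_of_natCast_mem hp hp2 hv, Ideal.absNorm_apply, Submodule.cardQuot_apply]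
  have hdvd : ¬ 9 ∣ p ^ 2 - 1 := by
    have : p ^ 2 % 9 = 4 ∨ p ^ 2 % 9 = 7 := by
      obtain h | h := hp9 <;> simp [Nat.pow_mod, h]
    omega
  have := v.isMaximal
  let _ : Field (𝓞 K ⧸ v.asIdeal) := Ideal.Quotient.field v.asIdeal
  have : Finite (𝓞 K ⧸ v.asIdeal) := Ideal.finiteQuotientOfFreeOfNeBot _ v.ne_bot
  obtain ⟨r, hr⟩ := exists_cube_sub_mem v hu
  rw [← Ideal.Quotient.eq] at hr
  have hy : (Ideal.Quotient.mk v.asIdeal (r ^ 2)) ^ 9 = 1 := by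
    rw [← map_pow, ← pow_mul, pow_mul r 3 6, map_pow, hr, ← map_pow, hu6, map_one]
  have hsq : Ideal.Quotient.mk v.asIdeal (u ^ 2) = 1 := by
    rw [map_pow, ← hr, ← map_pow, ← pow_mul, mul_comm, pow_mul, map_pow]
    exact pow_three_eq_one_of_pow_nine_eq_one (hcard ▸ hdvd) hy
  have hu2 : (u : 𝓞 K) ^ 2 = 1 := eq_one_of_pow_three_eq_one_of_sub_one_mem h3
    (by rw [← pow_mul, hu6]) (Ideal.Quotient.eq.mp (hsq.trans (map_one _).symm))
  have hu3 : (u : 𝓞 K) ^ 3 = u := by rw [pow_succ, hu2, one_mul]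
  exact .of_pow_eq (s := algebraMap (𝓞 K) K u) (by simp) (by rw [← map_pow, hu3])

end Eisenstein

/-- The point is scaled by its coordinate of largest valuation. -/
lemma HasCubicPoint.exists_valuation_le_one {F Γ : Type*} [Field F]
    [LinearOrderedCommGroupWithZero Γ] (v : Valuation F Γ) {a b c : F} (h : HasCubicPoint a b c) :
    ∃ x : Fin 3 → F, (∀ i, v (x i) ≤ 1) ∧ (∃ i, v (x i) = 1) ∧
      a * x 0 ^ 3 + b * x 1 ^ 3 = c * x 2 ^ 3 := by
  obtain ⟨x, y, z, hne, h⟩ := h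
  obtain ⟨i, hi⟩ := Finite.exists_max fun i ↦ v (![x, y, z] i)
  have hi0 : ![x, y, z] i ≠ 0 := fun h0 ↦ hne <| by
    simpa [h0, Fin.forall_fin_succ] using hi
  refine ⟨fun j ↦ ![x, y, z] j / ![x, y, z] i, fun j ↦ ?_, ⟨i, by simp [hi0]⟩, ?_⟩
  · rw [map_div₀, div_le_one₀ (by simpa [zero_lt_iff])]
    exact hi j
  · simp only [div_pow]
    field_simp
    exact h

section PrimesAboveThree

open HeightOneSpectrum WithZero

variable {K : Type*} [Field K] [NumberField K] {v : HeightOneSpectrum (𝓞 K)}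

/-- If `m = n + 9t` then `m n² ≡ (n + 3t)³` modulo `27`. -/
lemma intCast_cubeEquiv_of_nine_dvd_sub (h3 : 3 ∈ v.asIdeal) {m n : ℤ} (hmn : 9 ∣ m - n)
    (hn : ¬ 3 ∣ n) : CubeEquiv (m : v.adicCompletion K) n := by
  have hunit {k : ℤ} (hk : ¬ 3 ∣ k) : Valued.v (k : v.adicCompletion K) = 1 := by
    rw [valued_intCast, intValuation_eq_one_iff,
      intCast_mem_ideal_iff_dvd v.isPrime.ne_top Nat.prime_three (mod_cast h3)]
    exact hk
  have hne {k : ℤ} (hk : ¬ 3 ∣ k) : (k : v.adicCompletion K) ≠ 0 := fun h ↦ by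
    simpa [h] using hunit hk
  have h27 : Valued.v (27 : v.adicCompletion K) < Valued.v (9 : v.adicCompletion K) := by
    have hlt : Valued.v (3 : v.adicCompletion K) < 1 := by
      rw [← Nat.cast_ofNat, valued_natCast, intValuation_lt_one_iff_mem]
      exact mod_cast h3
    rw [show (27 : v.adicCompletion K) = 9 * 3 by norm_num, map_mul]
    exact mul_lt_of_lt_one_right (by simp [zero_lt_iff]) hlt
  obtain ⟨t, ht⟩ := hmn
  set k : ℤ := n + 3 * t with hk
  have hm0 := hne (k := m) (by omega)
  have hk0 := hne (k := k) (by omega)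
  obtain ⟨s, hs⟩ := exists_cube_eq_of_valued_sub_one_lt (v := v) (w := m * n ^ 2 / k ^ 3) (by
    rw [div_sub_one (pow_ne_zero 3 hk0), map_div₀, map_pow, hunit (by omega), one_pow, div_one]
    refine lt_of_le_of_lt ?_ h27
    have heq : (m * n ^ 2 - k ^ 3 : v.adicCompletion K) = 27 * (-(n * t ^ 2 + t ^ 3) : ℤ) := by
      rw [hk, eq_add_of_sub_eq ht]
      push_cast
      ring
    rw [heq, map_mul]
    exact mul_le_of_le_one_right' (valued_intCast_le_one _))
  have hn0 := hne hn
  have hs0 : s ≠ 0 := ne_zero_pow three_ne_zero (by simp [hs, hm0, hk0, hn0])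
  refine ⟨k * s / n, by simp [hk0, hs0, hn0], ?_⟩
  rw [div_pow, mul_pow, hs]
  field_simp

lemma natCast_cubeEquiv_one_of_mod_nine_eq_eight (h3 : 3 ∈ v.asIdeal) {n : ℕ} (hn : n % 9 = 8) :
    CubeEquiv (n : v.adicCompletion K) 1 := by
  have h := intCast_cubeEquiv_of_nine_dvd_sub (v := v) (m := n) (n := -1) h3 (by omega)
    (by norm_num)
  exact .trans (mod_cast h) ⟨-1, by simp, by norm_num⟩

variable [IsCyclotomicExtension {3} ℚ K]

lemma asIdeal_eq_span_zeta_sub_one {ζ : K} (hζ : IsPrimitiveRoot ζ 3) (h3 : 3 ∈ v.asIdeal) :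
    v.asIdeal = Ideal.span {hζ.toInteger - 1} := by
  have := Fact.mk Nat.prime_three
  have := liesOver_span_of_natCast_mem v.isPrime.ne_top Nat.prime_three (mod_cast h3)
  exact IsCyclotomicExtension.Rat.eq_span_zeta_sub_one_of_liesOver' 3 K hζ v.asIdeal

lemma valued_three (h3 : 3 ∈ v.asIdeal) : Valued.v (3 : v.adicCompletion K) = exp (-2) := by
  have := Fact.mk Nat.prime_three
  have hζ := IsCyclotomicExtension.zeta_spec 3 ℚ K
  obtain ⟨u, hu⟩ := IsCyclotomicExtension.Rat.associated_zeta_sub_one_pow_prime 3 hζ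
  have hval := valued_algebraMap_integer (K := K) v (3 : ℕ)
  rw [map_natCast, ← hu, map_mul, map_pow,
    v.intValuation_singleton hζ.zeta_sub_one_prime'.ne_zero (asIdeal_eq_span_zeta_sub_one hζ h3),
    intValuation_eq_one_iff.mpr fun h ↦ v.isPrime.ne_top (Ideal.eq_top_of_isUnit_mem _ h u.isUnit)]
    at hval
  simpa using hval

lemma valued_cube_sub_cube_le (h3 : 3 ∈ v.asIdeal) {x y : v.adicCompletion K}
    (hx : Valued.v x ≤ 1) (hy : Valued.v y ≤ 1) (hxy : Valued.v (x - y) < 1) :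
    Valued.v (x ^ 3 - y ^ 3) ≤ exp (-3) := by
  have hlt : Valued.v (x - y) ≤ exp (-1) := by
    rwa [← lt_mul_exp_iff_le exp_ne_zero, ← exp_add, neg_add_cancel, exp_zero]
  rw [show x ^ 3 - y ^ 3 = (x - y) ^ 3 + 3 * (x * y) * (x - y) by ring]
  refine Valuation.map_add_le _ ?_ ?_
  · rw [map_pow]
    exact pow_le_pow_left' hlt 3
  · rw [map_mul, map_mul, map_mul, valued_three h3]
    calc exp (-2) * (Valued.v x * Valued.v y) * Valued.v (x - y)
        ≤ exp (-2) * (1 * 1) * exp (-1) := by gcongr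
      _ = exp (-3) := by rw [one_mul, mul_one, ← exp_add]; rfl

/-- Every integer is `0`, `1` or `-1` modulo the maximal ideal, and cubing turns this into a
congruence modulo its third power. -/
lemma exists_int_valued_cube_sub_le (h3 : 3 ∈ v.asIdeal) {x : v.adicCompletion K}
    (hx : Valued.v x ≤ 1) :
    ∃ n : ℤ, |n| ≤ 1 ∧ Valued.v (x ^ 3 - n) ≤ exp (-3) := by
  have hζ := IsCyclotomicExtension.zeta_spec 3 ℚ K
  suffices ∃ n : ℤ, |n| ≤ 1 ∧ Valued.v (x - n) < 1 by
    obtain ⟨n, hn, h⟩ := this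
    refine ⟨n, hn, ?_⟩
    have hn3 : n ^ 3 = n := by
      have := abs_le.mp hn
      obtain rfl | rfl | rfl : n = -1 ∨ n = 0 ∨ n = 1 := by omega
      all_goals rfl
    have hn3 : (n : v.adicCompletion K) ^ 3 = n := mod_cast congrArg Int.cast hn3
    rw [← hn3]
    exact valued_cube_sub_cube_le h3 hx (valued_intCast_le_one n) h
  lift x to v.adicCompletionIntegers K using hx
  obtain ⟨r, hr⟩ := exists_residue_eq_residue_algebraMap v x
  obtain ⟨n, hn, hrn⟩ : ∃ n : ℤ, |n| ≤ 1 ∧ hζ.toInteger - 1 ∣ r - n := by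
    obtain h | h | h :=
      IsCyclotomicExtension.Rat.Three.lambda_dvd_or_dvd_sub_one_or_dvd_add_one hζ r
    · exact ⟨0, by simp, by simpa using h⟩
    · exact ⟨1, by simp, by simpa using h⟩
    · exact ⟨-1, by simp, by simpa using h⟩
  refine ⟨n, hn, ?_⟩
  rw [← Ideal.mem_span_singleton, ← asIdeal_eq_span_zeta_sub_one hζ h3,
    ← residue_algebraMap_eq_zero_iff (K := K), map_sub, map_sub, hr, ← map_sub,
    residue_eq_zero_iff_valued_lt_one] at hrn
  simpa using hrn

lemma nine_dvd_of_valued_le (h3 : 3 ∈ v.asIdeal) {n : ℤ}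
    (hn : Valued.v (n : v.adicCompletion K) ≤ exp (-3)) : 9 ∣ n := by
  have hdvd {m : ℤ} (hm : Valued.v (m : v.adicCompletion K) < 1) : 3 ∣ m := by
    rw [valued_intCast, intValuation_lt_one_iff_mem] at hm
    exact (intCast_mem_ideal_iff_dvd v.isPrime.ne_top Nat.prime_three (mod_cast h3)).mp hm
  obtain ⟨m, rfl⟩ := hdvd (hn.trans_lt (by rw [← exp_zero, exp_lt_exp]; norm_num))
  suffices 3 ∣ m by omega
  refine hdvd ?_
  rw [Int.cast_mul, map_mul, Int.cast_ofNat, valued_three h3] at hn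
  calc Valued.v (m : v.adicCompletion K)
      = exp 2 * (exp (-2) * Valued.v (m : v.adicCompletion K)) := by
        rw [← mul_assoc, ← exp_add, add_neg_cancel, exp_zero, one_mul]
    _ ≤ exp 2 * exp (-3) := by gcongr
    _ < 1 := by rw [← exp_add, ← exp_zero, exp_lt_exp]; norm_num

lemma HasCubicPoint.exists_nine_dvd (h3 : 3 ∈ v.asIdeal) {a b c : ℤ}
    (h : HasCubicPoint (a : v.adicCompletion K) b c) :
    ∃ n : Fin 3 → ℤ, (∀ i, |n i| ≤ 1) ∧ (∃ i, n i ≠ 0) ∧ 9 ∣ a * n 0 + b * n 1 - c * n 2 := by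
  obtain ⟨x, hx, ⟨i, hi⟩, h⟩ := h.exists_valuation_le_one Valued.v
  choose n hn hxn using fun i ↦ exists_int_valued_cube_sub_le h3 (hx i)
  refine ⟨n, hn, ⟨i, fun h0 ↦ ?_⟩, nine_dvd_of_valued_le (v := v) h3 ?_⟩
  · have hle := hxn i
    rw [h0, Int.cast_zero, sub_zero, map_pow, hi, one_pow, ← exp_zero, exp_le_exp] at hle
    norm_num at hle
  · have hvn (k : ℤ) (i : Fin 3) : Valued.v (k * (x i ^ 3 - n i)) ≤ exp (-3) := by
      rw [map_mul]
      exact (mul_le_of_le_one_left' (valued_intCast_le_one k)).trans (hxn i)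
    have hsum := Valuation.map_add_le _ (Valuation.map_add_le _ (hvn (-a) 0) (hvn (-b) 1)) (hvn c 2)
    convert hsum using 2
    push_cast
    linear_combination h

lemma not_hasCubicPoint_two (h3 : 3 ∈ v.asIdeal) :
    ¬ HasCubicPoint (2 : v.adicCompletion K) 2⁻¹ 1 := fun h ↦ by
  have h4 : HasCubicPoint ((4 : ℤ) : v.adicCompletion K) (1 : ℤ) (2 : ℤ) := by
    convert h.mul_right 2 <;> norm_num
  obtain ⟨n, hn, ⟨i, hi⟩, hdvd⟩ := h4.exists_nine_dvd h3
  have hn0 := abs_le.mp (hn 0)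
  have hn1 := abs_le.mp (hn 1)
  have hn2 := abs_le.mp (hn 2)
  have heq : 4 * n 0 + n 1 = 2 * n 2 := by omega
  have hzero : n 0 = 0 ∧ n 1 = 0 ∧ n 2 = 0 := by omega
  exact hi (by fin_cases i <;> simp [hzero])

lemma exists_cubeEquiv_generator_of_three_mem (h3 : 3 ∈ v.asIdeal) {p₁ p₂ p₃ : ℕ}
    (hmod : (p₁ % 9 = 2 ∧ p₂ % 9 = 2 ∧ p₃ % 9 = 5) ∨ (p₁ % 9 = 5 ∧ p₂ % 9 = 5 ∧ p₃ % 9 = 2)) :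
    ∃ g : v.adicCompletion K, g ≠ 0 ∧ ¬ HasCubicPoint g g⁻¹ 1 ∧
      CubeEquiv (p₁ : v.adicCompletion K) g ∧ CubeEquiv (p₂ : v.adicCompletion K) g ∧
      CubeEquiv (p₃ : v.adicCompletion K) (g ^ 2) := by
  have htwo {p : ℕ} (hp : p % 9 = 2) : CubeEquiv (p : v.adicCompletion K) 2 :=
    mod_cast intCast_cubeEquiv_of_nine_dvd_sub (v := v) (m := p) (n := 2) h3 (by omega)
      (by norm_num)
  have hfour {p : ℕ} (hp : p % 9 = 5) : CubeEquiv (p : v.adicCompletion K) (2 ^ 2) := by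
    have h := intCast_cubeEquiv_of_nine_dvd_sub (v := v) (m := p) (n := -4) h3 (by omega)
      (by norm_num)
    exact .trans (mod_cast h) ⟨-1, by simp, by norm_num⟩
  obtain ⟨h₁, h₂, h₃⟩ | ⟨h₁, h₂, h₃⟩ := hmod
  · exact ⟨2, two_ne_zero, not_hasCubicPoint_two h3, htwo h₁, htwo h₂, hfour h₃⟩
  · refine ⟨2 ^ 2, by simp, fun h ↦ not_hasCubicPoint_two h3 ?_, hfour h₁, hfour h₂,
      (htwo h₃).trans ⟨2⁻¹, by simp, by norm_num⟩⟩
    refine h.swap.congr ⟨2⁻¹, by simp, by norm_num⟩ ⟨2, by simp, by norm_num⟩ (.refl 1)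

end PrimesAboveThree

section PrincipalIdealRing

open HeightOneSpectrum WithZero

variable {R : Type*} [CommRing R] [IsDedekindDomain R] [IsPrincipalIdealRing R]

lemma exists_eq_units_mul_pow_of_dvd_log_intValuation {n : ℕ} {a : R} (ha : a ≠ 0)
    (h : ∀ v : HeightOneSpectrum R, (n : ℤ) ∣ log (v.intValuation a)) :
    ∃ (u : Rˣ) (c : R), a = u * c ^ n := by
  have hspan : Associates.mk (Ideal.span {a}) ≠ 0 := by simpa [Associates.mk_ne_zero] using ha
  obtain ⟨J, hJ⟩ := Associates.is_pow_of_dvd_count (k := n) hspan fun q hq ↦ by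
    obtain ⟨P, rfl⟩ := Associates.mk_surjective q
    have hP := Associates.irreducible_mk.mp hq
    have hdvd := h ⟨P, Ideal.isPrime_of_prime hP.prime, hP.ne_zero⟩
    rw [intValuation_if_neg _ ha, log_exp, dvd_neg] at hdvd
    exact mod_cast hdvd
  obtain ⟨J, rfl⟩ := Associates.mk_surjective J
  obtain ⟨c, rfl⟩ := (IsPrincipalIdealRing.principal J).principal
  rw [← Associates.mk_pow, Associates.mk_eq_mk_iff_associated, associated_iff_eq,
    Ideal.submodule_span_eq, Ideal.span_singleton_pow, Ideal.span_singleton_eq_span_singleton] at hJ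
  obtain ⟨u, hu⟩ := hJ.symm
  exact ⟨u, c, by rw [← hu, mul_comm]⟩

variable {K : Type*} [Field K] [Algebra R K] [IsFractionRing R K]

lemma exists_eq_units_mul_pow_of_dvd_log_valuation {n : ℕ} (hn : n ≠ 0) {x : K} (hx : x ≠ 0)
    (h : ∀ v : HeightOneSpectrum R, (n : ℤ) ∣ log (v.valuation K x)) :
    ∃ (u : Rˣ) (γ : K), x = algebraMap R K u * γ ^ n := by
  obtain ⟨a, b, hb, rfl⟩ := IsFractionRing.div_surjective (A := R) x
  have hb0 : algebraMap R K b ≠ 0 := by simpa using nonZeroDivisors.ne_zero hb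
  have ha0 : algebraMap R K a ≠ 0 := by rintro h; simp [h] at hx
  have hab : algebraMap R K (a * b ^ (n - 1)) =
      algebraMap R K a / algebraMap R K b * algebraMap R K b ^ n := by
    obtain ⟨n, rfl⟩ := Nat.exists_eq_succ_of_ne_zero hn
    simp only [map_mul, map_pow, Nat.succ_sub_one, pow_succ]
    field_simp
  obtain ⟨u, c, hc⟩ := exists_eq_units_mul_pow_of_dvd_log_intValuation (n := n)
    (a := a * b ^ (n - 1)) (mul_ne_zero (by rintro rfl; simp at ha0)
      (pow_ne_zero _ (nonZeroDivisors.ne_zero hb))) fun v ↦ by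
      have hval : v.intValuation (a * b ^ (n - 1)) =
          v.valuation K (algebraMap R K (a * b ^ (n - 1))) := (v.valuation_of_algebraMap _).symm
      rw [hval, hab, map_mul, map_pow, log_mul ((Valuation.ne_zero_iff _).mpr hx)
        (pow_ne_zero n ((Valuation.ne_zero_iff _).mpr hb0)), log_pow, nsmul_eq_mul]
      exact dvd_add (h v) (dvd_mul_right _ _)
  refine ⟨u, algebraMap R K c / algebraMap R K b, ?_⟩
  rw [hc, map_mul, map_pow] at hab
  rw [div_pow, ← mul_div_assoc, hab]
  field_simp

end PrincipalIdealRing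

section PrimeSpec

open HeightOneSpectrum WithZero

variable {R : Type*} [CommRing R] [IsDedekindDomain R]

lemma mem_primeSpec_asIdeal {q : R} (hq : Prime q) {x : R} : x ∈ (primeSpec hq).asIdeal ↔ q ∣ x :=
  Ideal.mem_span_singleton

lemma intValuation_primeSpec_self {q : R} (hq : Prime q) :
    (primeSpec hq).intValuation q = exp (-1) :=
  intValuation_singleton _ hq.ne_zero rfl

variable [IsPrincipalIdealRing R]

lemma exists_eq_primeSpec (v : HeightOneSpectrum R) :
    ∃ (q : R) (hq : Prime q), v = primeSpec hq := by
  obtain ⟨q, hq⟩ := (IsPrincipalIdealRing.principal v.asIdeal).principal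
  rw [Ideal.submodule_span_eq] at hq
  have hq0 : q ≠ 0 := by rintro rfl; exact v.ne_bot (by simp [hq])
  have hprime : Prime q := (Ideal.span_singleton_prime hq0).mp (hq ▸ v.isPrime)
  exact ⟨q, hprime, HeightOneSpectrum.ext hq⟩

lemma forall_primeSpec_iff {P : HeightOneSpectrum R → Prop} :
    (∀ (q : R) (hq : Prime q), P (primeSpec hq)) ↔ ∀ v, P v := by
  refine ⟨fun h v ↦ ?_, fun h q hq ↦ h _⟩
  obtain ⟨q, hq, rfl⟩ := exists_eq_primeSpec v
  exact h q hq

lemma eq_primeSpec_of_mem {q : R} (hq : Prime q) {v : HeightOneSpectrum R}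
    (hv : q ∈ v.asIdeal) : v = primeSpec hq := by
  obtain ⟨r, hr, rfl⟩ := exists_eq_primeSpec v
  refine HeightOneSpectrum.ext (Ideal.span_singleton_eq_span_singleton.mpr ?_)
  exact (hr.dvd_prime_iff_associated hq).mp ((mem_primeSpec_asIdeal hr).mp hv)

variable {K : Type*} [Field K] [Algebra R K] [IsFractionRing R K]

lemma exists_eq_units_mul_prod_mul_pow {ι : Type*} [Fintype ι] {q : ι → R}
    (hq : ∀ i, Prime (q i)) (hpair : Pairwise fun i j ↦ ¬ q i ∣ q j) {n : ℕ} (hn : n ≠ 0)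
    {x : K} (hx : x ≠ 0) (h : ∀ v : HeightOneSpectrum R, (∀ i, q i ∉ v.asIdeal) →
      (n : ℤ) ∣ log (v.valuation K x)) :
    ∃ (u : Rˣ) (e : ι → ℤ) (γ : K),
      x = algebraMap R K u * (∏ i, algebraMap R K (q i) ^ e i) * γ ^ n := by
  set e : ι → ℤ := fun i ↦ -log ((primeSpec (hq i)).valuation K x)
  set y : K := ∏ i, algebraMap R K (q i) ^ e i
  have hy : y ≠ 0 := Finset.prod_ne_zero_iff.mpr fun i _ ↦ zpow_ne_zero _ (by
    simpa using (hq i).ne_zero)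
  have hone {v : HeightOneSpectrum R} {i : ι} (hi : q i ∉ v.asIdeal) :
      v.valuation K (algebraMap R K (q i) ^ e i) = 1 := by
    rw [map_zpow₀, valuation_of_algebraMap, intValuation_eq_one_iff.mpr hi, one_zpow]
  have hlog (v : HeightOneSpectrum R) : (n : ℤ) ∣ log (v.valuation K (x / y)) := by
    rw [map_div₀, log_div (by simpa) (by simpa)]
    by_cases hv : ∃ i, q i ∈ v.asIdeal
    · obtain ⟨i, hi⟩ := hv
      obtain rfl := eq_primeSpec_of_mem (hq i) hi
      have hyi : (primeSpec (hq i)).valuation K y = exp (-1) ^ e i := by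
        rw [map_prod, Fintype.prod_eq_single i fun j hj ↦ hone
          (mt (mem_primeSpec_asIdeal (hq i)).mp (hpair hj.symm)), map_zpow₀,
          valuation_of_algebraMap, intValuation_primeSpec_self]
      rw [hyi, log_zpow, log_exp]
      simp [e]
    · push Not at hv
      rw [map_prod, Finset.prod_eq_one fun i _ ↦ hone (hv i), log_one, sub_zero]
      exact h v hv
  obtain ⟨u, γ, hγ⟩ := exists_eq_units_mul_pow_of_dvd_log_valuation hn (div_ne_zero hx hy) hlog
  refine ⟨u, e, γ, ?_⟩
  rw [mul_right_comm, ← hγ, div_mul_cancel₀ x hy]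

end PrimeSpec

section InertPrime

open HeightOneSpectrum WithZero

variable {K : Type*} [Field K] [NumberField K] {v : HeightOneSpectrum (𝓞 K)}

lemma exists_natCast_mem_asIdeal {p : ℕ} (hp : p.Prime) :
    ∃ v : HeightOneSpectrum (𝓞 K), (p : 𝓞 K) ∈ v.asIdeal := by
  have hp0 : (p : 𝓞 K) ≠ 0 := Nat.cast_ne_zero.mpr hp.ne_zero
  have hunit : ¬ IsUnit (p : 𝓞 K) := by
    rw [← Ideal.span_singleton_eq_top, ← Ideal.absNorm_eq_one_iff, Ideal.absNorm_span_natCast,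
      Nat.pow_eq_one, RingOfIntegers.rank]
    exact not_or.mpr ⟨hp.ne_one, Module.finrank_pos.ne'⟩
  obtain ⟨M, hM, hpM⟩ := exists_max_ideal_of_mem_nonunits hunit
  exact ⟨⟨M, hM.isPrime, fun h ↦ hp0 (by simpa [h] using hpM)⟩, hpM⟩

variable [IsCyclotomicExtension {3} ℚ K] {p : ℕ}

lemma prime_natCast_of_mod_three_eq_two (hp : p.Prime) (hp2 : p % 3 = 2) : Prime (p : 𝓞 K) := by
  obtain ⟨v, hv⟩ := exists_natCast_mem_asIdeal (K := K) hp
  rw [← Ideal.span_singleton_prime (Nat.cast_ne_zero.mpr hp.ne_zero),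
    ← asIdeal_eq_span_natCast hp hp2 hv]
  exact v.isPrime

lemma log_valued_natCast (hp : p.Prime) (hp2 : p % 3 = 2) (hv : (p : 𝓞 K) ∈ v.asIdeal) :
    log (Valued.v (p : v.adicCompletion K)) = -1 := by
  rw [valued_natCast, intValuation_singleton v (Nat.cast_ne_zero.mpr hp.ne_zero)
    (asIdeal_eq_span_natCast hp hp2 hv), log_exp]

end InertPrime

section LocalConditions

open HeightOneSpectrum WithZero

variable {K : Type*} [Field K] [NumberField K] {v : HeightOneSpectrum (𝓞 K)}

lemma natCast_pow_mul_cubeEquiv {p n : ℕ} (hp : p.Prime) (hp2 : p % 3 = 2)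
    (hv : (p : 𝓞 K) ∈ v.asIdeal) (hn : ¬ p ∣ n) {k : ℕ} :
    CubeEquiv ((p ^ k * n : ℕ) : v.adicCompletion K) (p ^ k) := by
  simpa using (CubeEquiv.refl ((p : v.adicCompletion K) ^ k)).mul
    (natCast_cubeEquiv_one hp hp2 hv hn)

variable [IsCyclotomicExtension {3} ℚ K]

lemma cubeEquiv_one_of_mul_zpow_cubeEquiv_zpow {p : ℕ} (hp : p.Prime) (hp2 : p % 3 = 2)
    (hv : (p : 𝓞 K) ∈ v.asIdeal) {w : v.adicCompletion K} (hw : Valued.v w = 1) {i j : ℤ}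
    (h : CubeEquiv (w * p ^ i) ((p : v.adicCompletion K) ^ j)) : CubeEquiv w 1 := by
  have hp0 : (p : v.adicCompletion K) ≠ 0 := Nat.cast_ne_zero.mpr hp.ne_zero
  have hlog (n : ℤ) : log (Valued.v ((p : v.adicCompletion K) ^ n)) = -n := by
    rw [map_zpow₀, log_zpow, log_valued_natCast hp hp2 hv, smul_eq_mul, mul_neg_one]
  have hdvd : 3 ∣ j - i := by
    obtain ⟨t, ht, h⟩ := h
    have heq := congrArg (log ∘ Valued.v) h
    rw [Function.comp_apply, Function.comp_apply, map_mul, hw, one_mul, hlog,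
      log_valuation_mul_cube Valued.v (zpow_ne_zero j hp0) ht, hlog] at heq
    omega
  have hone := (h.trans (.zpow_of_dvd_sub hp0 hdvd)).mul (.refl ((p : v.adicCompletion K) ^ (-i)))
  rwa [mul_assoc, ← zpow_add₀ hp0, add_neg_cancel, zpow_zero, mul_one] at hone

lemma HasCubicPoint.units_cubeEquiv_one {p : ℕ} (hp : p.Prime) (hp9 : p % 9 = 2 ∨ p % 9 = 5)
    (hv : (p : 𝓞 K) ∈ v.asIdeal) {α A : v.adicCompletion K} {u : (𝓞 K)ˣ} {i : ℤ}
    (h : HasCubicPoint α α⁻¹ A) (hA : CubeEquiv A p)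
    (hα : CubeEquiv α (algebraMap (𝓞 K) (v.adicCompletion K) u * p ^ i)) :
    CubeEquiv (algebraMap (𝓞 K) K u) 1 := by
  have hp2 : p % 3 = 2 := by omega
  have hp0 : (p : v.adicCompletion K) ≠ 0 := Nat.cast_ne_zero.mpr hp.ne_zero
  have hu : Valued.v (algebraMap (𝓞 K) (v.adicCompletion K) u) = 1 := by
    refine (valued_algebraMap_integer (K := K) v _).trans (intValuation_eq_one_iff.mpr ?_)
    exact fun hmem ↦ v.isPrime.ne_top (Ideal.eq_top_of_isUnit_mem _ hmem u.isUnit)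
  have hu0 : algebraMap (𝓞 K) (v.adicCompletion K) u ≠ 0 := fun h0 ↦ by simp [h0] at hu
  obtain ⟨m, hm⟩ := (h.congr hα hα.inv hA).exists_cubeEquiv_zpow
    (three_notMem_of_natCast_mem v.isPrime.ne_top hp hp2 hv)
    (mul_ne_zero hu0 (zpow_ne_zero i hp0)) hp0 (by rw [log_valued_natCast hp hp2 hv]; decide)
  exact cubeEquiv_one_of_units_of_natCast_mem hp hp9 hv
    (cubeEquiv_one_of_mul_zpow_cubeEquiv_zpow hp hp2 hv hu hm)

/-- All of `p₁`, `p₂`, `p₃` are powers of a single `g` modulo cubes, and `A ~ g⁶ ~ 1`. -/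
lemma HasCubicPoint.three_dvd_of_three_mem (h3 : 3 ∈ v.asIdeal) {p₁ p₂ p₃ : ℕ}
    (hmod : (p₁ % 9 = 2 ∧ p₂ % 9 = 2 ∧ p₃ % 9 = 5) ∨ (p₁ % 9 = 5 ∧ p₂ % 9 = 5 ∧ p₃ % 9 = 2))
    {α : v.adicCompletion K} {a b c : ℤ} (hα : CubeEquiv α (p₁ ^ a * p₂ ^ b * p₃ ^ c))
    (h : HasCubicPoint α α⁻¹ ((p₁ * p₂ * p₃ ^ 2 : ℕ) : v.adicCompletion K)) :
    3 ∣ a + b + 2 * c := by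
  obtain ⟨g, hg0, hg, h₁, h₂, h₃⟩ := exists_cubeEquiv_generator_of_three_mem h3 hmod
  by_contra hdvd
  have hA : CubeEquiv ((p₁ * p₂ * p₃ ^ 2 : ℕ) : v.adicCompletion K) 1 := by
    push_cast
    exact ((h₁.mul h₂).mul (h₃.pow 2)).trans ⟨g ^ 2, pow_ne_zero 2 hg0, by ring⟩
  have hα' : CubeEquiv α (g ^ (a + b + 2 * c)) := by
    rw [zpow_add₀ hg0, zpow_add₀ hg0, zpow_mul]
    exact hα.trans (((h₁.zpow a).mul (h₂.zpow b)).mul (h₃.zpow c))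
  exact hg ((h.congr hα' hα'.inv hA).of_zpow hg0 hdvd)

end LocalConditions

section Global

open HeightOneSpectrum WithZero

variable {K : Type*} [Field K] [NumberField K] [IsCyclotomicExtension {3} ℚ K]
  {p₁ p₂ p₃ : ℕ}

lemma exists_cubeEquiv_units_mul_prod {ι : Type*} [Fintype ι] {p : ι → ℕ}
    (hp : ∀ i, (p i).Prime) (hp2 : ∀ i, p i % 3 = 2) (hinj : p.Injective) {x : K} (hx : x ≠ 0)
    (h : ∀ v : HeightOneSpectrum (𝓞 K), (∀ i, (p i : 𝓞 K) ∉ v.asIdeal) →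
      3 ∣ log (v.valuation K x)) :
    ∃ (u : (𝓞 K)ˣ) (e : ι → ℤ), CubeEquiv x (algebraMap (𝓞 K) K u * ∏ i, (p i : K) ^ e i) := by
  have := IsCyclotomicExtension.Rat.three_pid K
  have hq (i : ι) : Prime (p i : 𝓞 K) := prime_natCast_of_mod_three_eq_two (hp i) (hp2 i)
  have hpair : Pairwise fun i j ↦ ¬ (p i : 𝓞 K) ∣ p j := fun i j hij hdvd ↦ by
    rw [← mem_primeSpec_asIdeal (hq i), natCast_mem_ideal_iff_dvd (primeSpec (hq i)).isPrime.ne_top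
      (hp i) ((mem_primeSpec_asIdeal (hq i)).mpr dvd_rfl)] at hdvd
    exact hij (hinj ((Nat.prime_dvd_prime_iff_eq (hp i) (hp j)).mp hdvd))
  obtain ⟨u, e, γ, hγ⟩ := exists_eq_units_mul_prod_mul_pow hq hpair three_ne_zero hx h
  simp only [map_natCast] at hγ
  exact ⟨u, e, γ, ne_zero_pow three_ne_zero (right_ne_zero_of_mul (hγ ▸ hx)), hγ⟩

lemma exists_cubeEquiv_units_mul_zpow (hp₁ : p₁.Prime) (hp₂ : p₂.Prime) (hp₃ : p₃.Prime)
    (hne₁₂ : p₁ ≠ p₂) (hne₂₃ : p₂ ≠ p₃) (hne₁₃ : p₁ ≠ p₃)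
    (h₁ : p₁ % 3 = 2) (h₂ : p₂ % 3 = 2) (h₃ : p₃ % 3 = 2) {α : K} (hα : α ≠ 0)
    (h : ∀ v : HeightOneSpectrum (𝓞 K), HasCubicPoint (algebraMap K (v.adicCompletion K) α)
      (algebraMap K (v.adicCompletion K) α)⁻¹ ((p₁ * p₂ * p₃ ^ 2 : ℕ) : v.adicCompletion K)) :
    ∃ (u : (𝓞 K)ˣ) (a b c : ℤ),
      CubeEquiv α (algebraMap (𝓞 K) K u * (p₁ ^ a * p₂ ^ b * p₃ ^ c)) := by
  obtain ⟨u, e, he⟩ := exists_cubeEquiv_units_mul_prod (p := ![p₁, p₂, p₃]) (x := α)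
    (by simp [Fin.forall_fin_succ, *]) (by simp [Fin.forall_fin_succ, *])
    (by simp [Function.Injective, Fin.forall_fin_succ, *, Ne.symm, eq_comm]) hα fun v hv ↦ by
      have hA : Valued.v ((p₁ * p₂ * p₃ ^ 2 : ℕ) : v.adicCompletion K) = 1 := by
        have hv₁ : (p₁ : 𝓞 K) ∉ v.asIdeal := hv 0
        have hv₂ : (p₂ : 𝓞 K) ∉ v.asIdeal := hv 1
        have hv₃ : (p₃ : 𝓞 K) ∉ v.asIdeal := hv 2
        simp [valued_natCast_eq_one, hv₁, hv₂, hv₃]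
      rw [← valued_algebraMap]
      exact (h v).three_dvd_log_valuation_of_dvd Valued.v (by simpa) (fun h0 ↦ by simp [h0] at hA)
        (by rw [hA, log_one]; exact dvd_zero 3)
  exact ⟨u, e 0, e 1, e 2, by simpa [Fin.prod_univ_three] using he⟩

/-- The local condition at `p₁` forces the unit `u` to be a cube, and the one above `3` cuts out
`3 ∣ a + b + 2c`. -/
lemma exists_cubeEquiv_zpow_mul_zpow (hp₁ : p₁.Prime) (hp₂ : p₂.Prime) (hp₃ : p₃.Prime)
    (hne₁₂ : p₁ ≠ p₂)
    (hmod : (p₁ % 9 = 2 ∧ p₂ % 9 = 2 ∧ p₃ % 9 = 5) ∨ (p₁ % 9 = 5 ∧ p₂ % 9 = 5 ∧ p₃ % 9 = 2))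
    {α : K} (hα : α ≠ 0)
    (h : ∀ v : HeightOneSpectrum (𝓞 K), HasCubicPoint (algebraMap K (v.adicCompletion K) α)
      (algebraMap K (v.adicCompletion K) α)⁻¹ ((p₁ * p₂ * p₃ ^ 2 : ℕ) : v.adicCompletion K)) :
    ∃ m n : ℤ, CubeEquiv α
      (((p₁ * p₂ * p₃ ^ 2 : ℕ) : K) ^ m * ((p₁ * p₂ ^ 2 : ℕ) : K) ^ n) := by
  obtain ⟨u, a, b, c, habc⟩ := exists_cubeEquiv_units_mul_zpow hp₁ hp₂ hp₃ hne₁₂ (by omega)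
    (by omega) (by omega) (by omega) (by omega) hα h
  have hndvd {q : ℕ} (hq : q.Prime) (hne : p₁ ≠ q) : ¬ p₁ ∣ q :=
    mt (Nat.prime_dvd_prime_iff_eq hp₁ hq).mp hne
  have hu : CubeEquiv (algebraMap (𝓞 K) K u) 1 := by
    obtain ⟨v, hv⟩ := exists_natCast_mem_asIdeal (K := K) hp₁
    have h₂ := natCast_cubeEquiv_one hp₁ (by omega) hv (hndvd hp₂ hne₁₂)
    have h₃ := natCast_cubeEquiv_one hp₁ (by omega) hv (hndvd hp₃ (by omega))
    refine (h v).units_cubeEquiv_one hp₁ (by omega) hv (i := a) ?_ ?_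
    · simpa using ((CubeEquiv.refl (p₁ : v.adicCompletion K)).mul h₂).mul (h₃.pow 2)
    · have hmap := habc.map (algebraMap K (v.adicCompletion K))
      simp only [map_mul, map_zpow₀, map_natCast, ← IsScalarTower.algebraMap_apply] at hmap
      refine hmap.trans ((CubeEquiv.refl _).mul ?_)
      simpa using ((CubeEquiv.refl ((p₁ : v.adicCompletion K) ^ a)).mul (h₂.zpow b)).mul
        (h₃.zpow c)
  have hα' : CubeEquiv α (p₁ ^ a * p₂ ^ b * p₃ ^ c) := by
    simpa using habc.trans (hu.mul (.refl _))
  have hdvd : 3 ∣ a + b + 2 * c := by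
    obtain ⟨v, hv⟩ := exists_natCast_mem_asIdeal (K := K) Nat.prime_three
    refine (h v).three_dvd_of_three_mem (mod_cast hv) hmod ?_
    simpa using hα'.map (algebraMap K (v.adicCompletion K))
  refine ⟨2 * a - b, b - a, ?_⟩
  push_cast
  exact CubeEquiv.zpow_mul_zpow_of_three_dvd (Nat.cast_ne_zero.mpr hp₁.ne_zero)
    (Nat.cast_ne_zero.mpr hp₂.ne_zero) (Nat.cast_ne_zero.mpr hp₃.ne_zero) hα' hdvd

end Global

section Backward

open HeightOneSpectrum

variable {K : Type*} [Field K] [NumberField K] {v : HeightOneSpectrum (𝓞 K)}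

lemma hasCubicPoint_of_cubeEquiv_of_valued_eq_one (h3 : 3 ∉ v.asIdeal)
    {α β A : v.adicCompletion K} (hβ : Valued.v β = 1) (hA : Valued.v A = 1)
    (h : CubeEquiv α β) : HasCubicPoint α α⁻¹ A :=
  (hasCubicPoint_of_valued_eq_one h3 hβ (by rw [map_inv₀, hβ, inv_one]) hA).congr
    h.symm h.symm.inv (.refl A)

lemma exists_mul_sq_cubeEquiv_pow {p₁ p₂ p₃ : ℕ} (hp₁ : p₁.Prime) (hp₂ : p₂.Prime) (hp₃ : p₃.Prime)
    (hne₁₂ : p₁ ≠ p₂)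
    (hmod : (p₁ % 9 = 2 ∧ p₂ % 9 = 2 ∧ p₃ % 9 = 5) ∨ (p₁ % 9 = 5 ∧ p₂ % 9 = 5 ∧ p₃ % 9 = 2))
    (hv : 3 ∈ v.asIdeal ∨ (p₁ : 𝓞 K) ∈ v.asIdeal ∨ (p₂ : 𝓞 K) ∈ v.asIdeal ∨
      (p₃ : 𝓞 K) ∈ v.asIdeal) :
    ∃ k : ℕ, CubeEquiv ((p₁ * p₂ ^ 2 : ℕ) : v.adicCompletion K)
      (((p₁ * p₂ * p₃ ^ 2 : ℕ) : v.adicCompletion K) ^ k) := by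
  have hndvd {p q : ℕ} (hp : p.Prime) (hq : q.Prime) (hne : p ≠ q) : ¬ p ∣ q :=
    mt (Nat.prime_dvd_prime_iff_eq hp hq).mp hne
  have hndvd_mul {p q r : ℕ} (hp : p.Prime) (hq : ¬ p ∣ q) (hr : ¬ p ∣ r) : ¬ p ∣ q * r ^ 2 :=
    hp.prime.not_dvd_mul hq (mt hp.dvd_of_dvd_pow hr)
  obtain hv | hv | hv | hv := hv
  · refine ⟨0, ?_⟩
    rw [pow_zero]
    refine natCast_cubeEquiv_one_of_mod_nine_eq_eight hv ?_
    obtain ⟨h₁, h₂, -⟩ | ⟨h₁, h₂, -⟩ := hmod <;> simp [Nat.mul_mod, Nat.pow_mod, h₁, h₂]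
  · have hp2 : p₁ % 3 = 2 := by omega
    have hA := natCast_pow_mul_cubeEquiv (k := 1) hp₁ hp2 hv
      (hndvd_mul hp₁ (hndvd hp₁ hp₂ hne₁₂) (hndvd hp₁ hp₃ (by omega)))
    have hB := natCast_pow_mul_cubeEquiv (k := 1) hp₁ hp2 hv
      (mt hp₁.dvd_of_dvd_pow (hndvd hp₁ hp₂ hne₁₂) : ¬ p₁ ∣ p₂ ^ 2)
    rw [pow_one] at hA hB
    refine ⟨1, ?_⟩
    rw [pow_one, mul_assoc]
    exact hB.trans hA.symm
  · have hp2 : p₂ % 3 = 2 := by omega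
    have hA := natCast_pow_mul_cubeEquiv (k := 1) hp₂ hp2 hv
      (hndvd_mul hp₂ (hndvd hp₂ hp₁ hne₁₂.symm) (hndvd hp₂ hp₃ (by omega)))
    have hB := natCast_pow_mul_cubeEquiv (k := 2) hp₂ hp2 hv (hndvd hp₂ hp₁ hne₁₂.symm)
    rw [pow_one, pow_one] at hA
    refine ⟨2, ?_⟩
    rw [mul_comm p₁ (p₂ ^ 2), mul_comm p₁ p₂, mul_assoc]
    exact hB.trans (hA.pow 2).symm
  · refine ⟨0, ?_⟩
    rw [pow_zero]
    exact natCast_cubeEquiv_one hp₃ (by omega) hv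
      (hndvd_mul hp₃ (hndvd hp₃ hp₁ (by omega)) (hndvd hp₃ hp₂ (by omega)))

lemma hasCubicPoint_of_cubeEquiv_zpow_mul_zpow {p₁ p₂ p₃ : ℕ}
    (hp₁ : p₁.Prime) (hp₂ : p₂.Prime) (hp₃ : p₃.Prime)
    (hne₁₂ : p₁ ≠ p₂)
    (hmod : (p₁ % 9 = 2 ∧ p₂ % 9 = 2 ∧ p₃ % 9 = 5) ∨ (p₁ % 9 = 5 ∧ p₂ % 9 = 5 ∧ p₃ % 9 = 2))
    {α : v.adicCompletion K} {m n : ℤ}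
    (h : CubeEquiv α (((p₁ * p₂ * p₃ ^ 2 : ℕ) : v.adicCompletion K) ^ m *
      ((p₁ * p₂ ^ 2 : ℕ) : v.adicCompletion K) ^ n)) :
    HasCubicPoint α α⁻¹ ((p₁ * p₂ * p₃ ^ 2 : ℕ) : v.adicCompletion K) := by
  by_cases hv : 3 ∈ v.asIdeal ∨ (p₁ : 𝓞 K) ∈ v.asIdeal ∨ (p₂ : 𝓞 K) ∈ v.asIdeal ∨
      (p₃ : 𝓞 K) ∈ v.asIdeal
  · obtain ⟨k, hk⟩ := exists_mul_sq_cubeEquiv_pow hp₁ hp₂ hp₃ hne₁₂ hmod hv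
    have hA : p₁ * p₂ * p₃ ^ 2 ≠ 0 := by simp [hp₁.ne_zero, hp₂.ne_zero, hp₃.ne_zero]
    exact .of_cubeEquiv_zpow_mul_zpow (Nat.cast_ne_zero.mpr hA) hk h
  · push Not at hv
    obtain ⟨h3, hv₁, hv₂, hv₃⟩ := hv
    refine hasCubicPoint_of_cubeEquiv_of_valued_eq_one h3 ?_ ?_ h <;>
      simp [valued_natCast_eq_one, hv₁, hv₂, hv₃]

end Backward

/-- Lemma 2.5: let `p₁, p₂, p₃` be distinct rational primes with
`(p₁, p₂, p₃) ≡ (2,2,5)` or `(5,5,2) (mod 9)` and `A = p₁p₂p₃²`. A class `[α] ∈ k*/(k*)³`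
satisfies `C_{A,α}(k_q) ≠ ∅` for every prime `q` of `ℤ[ζ₃]` iff it lies in the subgroup
generated by `[A]` and `[p₁p₂²]`, i.e. iff `α = A^m · (p₁p₂²)^n · γ³` for some `m, n ∈ ℤ`
and `γ ∈ k*`. (This set is the `√-3`-Selmer group `S(A)`.) -/
theorem stmt6 (K : Type*) [Field K] [NumberField K] [IsCyclotomicExtension {3} ℚ K]
    (p₁ p₂ p₃ : ℕ) (hp₁ : p₁.Prime) (hp₂ : p₂.Prime) (hp₃ : p₃.Prime)
    (hne₁₂ : p₁ ≠ p₂) (hne₂₃ : p₂ ≠ p₃) (hne₁₃ : p₁ ≠ p₃)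
    (hmod : (p₁ % 9 = 2 ∧ p₂ % 9 = 2 ∧ p₃ % 9 = 5) ∨ (p₁ % 9 = 5 ∧ p₂ % 9 = 5 ∧ p₃ % 9 = 2))
    (α : K) (hα : α ≠ 0) :
    (∀ (q : 𝓞 K) (hq : Prime q),
        ∃ x y z : (primeSpec hq).adicCompletion K,
          ¬(x = 0 ∧ y = 0 ∧ z = 0) ∧
          algebraMap K ((primeSpec hq).adicCompletion K) α * x ^ 3
            + algebraMap K ((primeSpec hq).adicCompletion K) α⁻¹ * y ^ 3
            = algebraMap K ((primeSpec hq).adicCompletion K)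
                ((p₁ * p₂ * p₃ ^ 2 : ℕ) : K) * z ^ 3)
      ↔ ∃ (m n : ℤ) (γ : K),
          α = ((p₁ * p₂ * p₃ ^ 2 : ℕ) : K) ^ m * ((p₁ * p₂ ^ 2 : ℕ) : K) ^ n * γ ^ 3 := by
  have := IsCyclotomicExtension.Rat.three_pid K
  simp only [map_inv₀, map_natCast]
  refine Iff.trans (forall_primeSpec_iff (P := fun v ↦
    HasCubicPoint (algebraMap K (v.adicCompletion K) α) (algebraMap K (v.adicCompletion K) α)⁻¹
      ((p₁ * p₂ * p₃ ^ 2 : ℕ) : v.adicCompletion K))) ⟨fun h ↦ ?_, ?_⟩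
  · obtain ⟨m, n, γ, -, hγ⟩ := exists_cubeEquiv_zpow_mul_zpow hp₁ hp₂ hp₃ hne₁₂ hmod hα h
    exact ⟨m, n, γ, hγ⟩
  · rintro ⟨m, n, γ, hγ⟩ v
    have hcube : CubeEquiv α (((p₁ * p₂ * p₃ ^ 2 : ℕ) : K) ^ m * ((p₁ * p₂ ^ 2 : ℕ) : K) ^ n) :=
      ⟨γ, ne_zero_pow three_ne_zero (right_ne_zero_of_mul (hγ ▸ hα)), hγ⟩
    refine hasCubicPoint_of_cubeEquiv_zpow_mul_zpow hp₁ hp₂ hp₃ hne₁₂ hmod (m := m) (n := n) ?_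
    simpa only [map_mul, map_zpow₀, map_natCast] using hcube.map (algebraMap K (v.adicCompletion K))
end
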